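/- arXiv:1509.05149 — 7 statements merged into one kernel-verified Lean document; each statement's English description precedes it below -/
import Mathlib

section
/- Let α ∈ (0,1), k ∈ ℕ, and z₀, …, z_k be complex numbers. Then (1/(1−α)) Σ_{0≤i≤j≤k} α^{j−i} (z_i − 1)(∏_{i<l<j} z_l)(z_j − 1) = Σ_{0≤i≤j≤k} (1−α)^{K_{i,j,k}} α^{j−i} (z_i z_{i+1} ⋯ z_j − 1), where K_{i,j,k} = −1 if i = 0 and j = k; K_{i,j,k} = 0 if i = 0 and 0 ≤ j ≤ k−1, or if 1 ≤ i ≤ k and j = k; and K_{i,j,k} = 1 if 1 ≤ i ≤ j ≤ k−1. -/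
/-!
After multiplication by `1 - α`, the weight `(1 - α) ^ (K + 1)` on the right-hand side factors as
`u i * v j`, where `u 0 = 1`, `v k = 1`, and all other values are `1 - α`. Writing
`v j = (1 - α) + α * [j = k]`, the right-hand side becomes `(1 - α) * W k + α * D k`, where `D k` is
the weighted sum over the last column `j = k` and `W k = D 0 + ⋯ + D k`. Its increment in `k` is
therefore `D (k + 1) - α * D k`, in which the constant terms cancel. The increment of the left-hand
side is its last column. Both increments are `z (k + 1) - 1` times a sum over `i ≤ k`, and these two
sums agree by `column_identity`; induction on `k` concludes.
-/

/-- The row weight: `1` in row `0`, and `1 - a` in every later row. -/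
def rowWeight (a : ℂ) (i : ℕ) : ℂ := if i = 0 then 1 else 1 - a

/-- A sum over the triangle `i ≤ j ≤ k + 1` splits off its last column `j = k + 1`. -/
lemma triangle_succ (f : ℕ → ℕ → ℂ) (k : ℕ) :
    ∑ i ∈ Finset.range (k + 2), ∑ j ∈ Finset.Icc i (k + 1), f i j =
      (∑ i ∈ Finset.range (k + 1), ∑ j ∈ Finset.Icc i k, f i j) +
        ∑ i ∈ Finset.range (k + 2), f i (k + 1) := by
  rw [Finset.sum_range_succ, Finset.sum_range_succ (fun i => f i (k + 1)), ← add_assoc,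
    ← Finset.sum_add_distrib]
  simp only [Finset.Icc_self, Finset.sum_singleton]
  congr 1
  refine Finset.sum_congr rfl fun i hi => ?_
  rw [Finset.sum_Icc_succ_top (by have := Finset.mem_range.1 hi; omega)]

/-- Both sides obey the same first-order recursion in `k`. -/
lemma column_identity (a : ℂ) (z : ℕ → ℂ) (k : ℕ) :
    ∑ i ∈ Finset.range (k + 1), rowWeight a i * a ^ (k + 1 - i) * ∏ l ∈ Finset.Icc i k, z l =
      a + ∑ i ∈ Finset.range (k + 1),
        a ^ (k + 1 - i) * (z i - 1) * ∏ l ∈ Finset.Ioo i (k + 1), z l := by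
  induction k with
  | zero =>
    have h : Finset.Ioo 0 1 = ∅ := by decide
    simp [rowWeight, h]
    ring
  | succ k ih =>
    have hA : ∑ i ∈ Finset.range (k + 1),
          rowWeight a i * a ^ (k + 1 + 1 - i) * ∏ l ∈ Finset.Icc i (k + 1), z l =
        a * z (k + 1) * ∑ i ∈ Finset.range (k + 1),
          rowWeight a i * a ^ (k + 1 - i) * ∏ l ∈ Finset.Icc i k, z l := by
      rw [Finset.mul_sum]
      refine Finset.sum_congr rfl fun i hi => ?_
      have hi := Finset.mem_range.1 hi
      rw [Finset.prod_Icc_succ_top (by omega), show k + 1 + 1 - i = (k + 1 - i) + 1 by omega]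
      ring
    have hB : ∑ i ∈ Finset.range (k + 1),
          a ^ (k + 1 + 1 - i) * (z i - 1) * ∏ l ∈ Finset.Ioo i (k + 1 + 1), z l =
        a * z (k + 1) * ∑ i ∈ Finset.range (k + 1),
          a ^ (k + 1 - i) * (z i - 1) * ∏ l ∈ Finset.Ioo i (k + 1), z l := by
      rw [Finset.mul_sum]
      refine Finset.sum_congr rfl fun i hi => ?_
      have hi := Finset.mem_range.1 hi
      have hs : Finset.Ioo i (k + 1 + 1) = insert (k + 1) (Finset.Ioo i (k + 1)) := by
        ext x; simp only [Finset.mem_Ioo, Finset.mem_insert]; omega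
      rw [hs, Finset.prod_insert (by simp), show k + 1 + 1 - i = (k + 1 - i) + 1 by omega]
      ring
    have hs : Finset.Ioo (k + 1) (k + 1 + 1) = ∅ := by
      ext x; simp only [Finset.mem_Ioo, Finset.notMem_empty, iff_false]; omega
    rw [Finset.sum_range_succ, hA, Finset.sum_range_succ _ (k + 1), hB, ih, hs]
    simp [rowWeight]
    ring

/-- The identity multiplied by `1 - a`, with the column weight `v j = (1 - a) + a * [j = k]`
written out. -/
lemma cleared_identity (a : ℂ) (z : ℕ → ℂ) (k : ℕ) :
    ∑ i ∈ Finset.range (k + 1), ∑ j ∈ Finset.Icc i k,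
        (if i = j then z i - 1
         else a ^ (j - i) * (z i - 1) * (∏ l ∈ Finset.Ioo i j, z l) * (z j - 1)) =
      (1 - a) * (∑ i ∈ Finset.range (k + 1), ∑ j ∈ Finset.Icc i k,
          rowWeight a i * a ^ (j - i) * ((∏ l ∈ Finset.Icc i j, z l) - 1)) +
        a * ∑ i ∈ Finset.range (k + 1),
          rowWeight a i * a ^ (k - i) * ((∏ l ∈ Finset.Icc i k, z l) - 1) := by
  induction k with
  | zero => simp [rowWeight]; ring
  | succ k ih =>
    rw [triangle_succ, triangle_succ, ih]
    have hL : ∑ i ∈ Finset.range (k + 2), (if i = k + 1 then z i - 1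
          else a ^ (k + 1 - i) * (z i - 1) * (∏ l ∈ Finset.Ioo i (k + 1), z l) * (z (k + 1) - 1)) =
        (∑ i ∈ Finset.range (k + 1),
          a ^ (k + 1 - i) * (z i - 1) * ∏ l ∈ Finset.Ioo i (k + 1), z l) * (z (k + 1) - 1) +
          (z (k + 1) - 1) := by
      rw [Finset.sum_range_succ, Finset.sum_mul, if_pos rfl]
      congr 1
      refine Finset.sum_congr rfl fun i hi => ?_
      rw [if_neg (by have := Finset.mem_range.1 hi; omega)]
    have hD : ∑ i ∈ Finset.range (k + 2),
          rowWeight a i * a ^ (k + 1 - i) * ((∏ l ∈ Finset.Icc i (k + 1), z l) - 1) =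
        a * (∑ i ∈ Finset.range (k + 1),
          rowWeight a i * a ^ (k - i) * ((∏ l ∈ Finset.Icc i k, z l) - 1)) +
        (∑ i ∈ Finset.range (k + 1),
          rowWeight a i * a ^ (k + 1 - i) * ∏ l ∈ Finset.Icc i k, z l) * (z (k + 1) - 1) +
        (1 - a) * (z (k + 1) - 1) := by
      rw [Finset.sum_range_succ, Finset.sum_mul, Finset.mul_sum, ← Finset.sum_add_distrib]
      congr 1
      · refine Finset.sum_congr rfl fun i hi => ?_
        have hi := Finset.mem_range.1 hi
        rw [Finset.prod_Icc_succ_top (by omega), show k + 1 - i = (k - i) + 1 by omega]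
        ring
      · simp [rowWeight]
    rw [hL, hD, column_identity]
    ring

theorem stmt_1 (α : ℝ) (hα : α ∈ Set.Ioo (0 : ℝ) 1) (k : ℕ) (z : ℕ → ℂ) :
    (1 / (1 - (α : ℂ))) *
        ∑ i ∈ Finset.range (k + 1), ∑ j ∈ Finset.Icc i k,
          (if i = j then z i - 1
           else (α : ℂ) ^ (j - i) * (z i - 1) * (∏ l ∈ Finset.Ioo i j, z l) * (z j - 1)) =
      ∑ i ∈ Finset.range (k + 1), ∑ j ∈ Finset.Icc i k,
        (1 - (α : ℂ)) ^
            ((if i = 0 ∧ j = k then (-1 : ℤ) else if 1 ≤ i ∧ j ≤ k - 1 then 1 else 0)) *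
          (α : ℂ) ^ (j - i) * ((∏ l ∈ Finset.Icc i j, z l) - 1) := by
  have h1 : (1 - (α : ℂ)) ≠ 0 := by
    rw [sub_ne_zero]
    exact_mod_cast hα.2.ne'
  rw [cleared_identity, one_div, inv_mul_eq_iff_eq_mul₀ h1, Finset.mul_sum, Finset.mul_sum,
    Finset.mul_sum, ← Finset.sum_add_distrib]
  refine Finset.sum_congr rfl fun i hi => ?_
  have hi := Finset.mem_range.1 hi
  -- The last-column term is put back inside the sum over `j` as an indicator of `j = k`.
  have hk : (α : ℂ) * (rowWeight α i * (α : ℂ) ^ (k - i) * ((∏ l ∈ Finset.Icc i k, z l) - 1)) =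
      ∑ j ∈ Finset.Icc i k, if j = k then
        (α : ℂ) * (rowWeight α i * (α : ℂ) ^ (j - i) * ((∏ l ∈ Finset.Icc i j, z l) - 1))
        else 0 := by
    rw [Finset.sum_ite_eq_of_mem' _ _ _ (Finset.mem_Icc.2 ⟨by omega, le_rfl⟩)]
  rw [hk, Finset.mul_sum, Finset.mul_sum, ← Finset.sum_add_distrib]
  refine Finset.sum_congr rfl fun j hj => ?_
  have hj := Finset.mem_Icc.1 hj
  unfold rowWeight
  by_cases hi0 : i = 0 <;> by_cases hjk : j = k
  · rw [if_pos hi0, if_pos hjk, if_pos ⟨hi0, hjk⟩, zpow_neg_one]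
    field_simp
    ring
  · rw [if_pos hi0, if_neg hjk, if_neg (by tauto), if_neg (by omega), zpow_zero]
    ring
  · rw [if_neg hi0, if_pos hjk, if_neg (by tauto), if_neg (by omega), zpow_zero]
    ring
  · rw [if_neg hi0, if_neg hjk, if_neg (by tauto), if_pos (by omega), zpow_one]
    ring
end

section
/- Let λ > 0 and α ∈ (0,1). For each x ∈ ℕ let κ(x) be the distribution on ℕ of B_x + ε, where B_x is binomially distributed with parameters x and α, and ε is Poisson distributed with mean λ, independent of B_x (i.e., κ(x) is the convolution of the binomial(x, α) distribution and the Poisson(λ) distribution). Then the Poisson distribution π with mean λ/(1−α) is invariant for the transition kernel κ: for every m ∈ ℕ, Σ_{x∈ℕ} π({x}) κ(x)({m}) = π({m}). -/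
/-!
If `X ~ Poisson(μ)`, then its binomial `α`-thinning is `Poisson(α μ)`-distributed
(`hasSum_poisson_thinning`), and adding an independent `Poisson(lam)` variable gives a
`Poisson(α μ + lam)` variable (`sum_poisson_convolution`). The value `μ = lam / (1 - α)` is the
solution of `α μ + lam = μ`, hence the invariance. Since the convolution at `m` is a finite sum,
it can be exchanged with the series over `x` by adding up finitely many convergent series.
-/

/-- Binomial thinning of a Poisson law: in the series over `x` the terms with `x < b` vanish, and
after the shift `x = y + b` what remains is the exponential series of `(1 - α) * μ`. -/
lemma hasSum_poisson_thinning (μ α : ℝ) (b : ℕ) :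
    HasSum (fun x : ℕ => Real.exp (-μ) * μ ^ x / x.factorial *
        ((x.choose b : ℝ) * α ^ b * (1 - α) ^ (x - b)))
      (Real.exp (-(α * μ)) * (α * μ) ^ b / b.factorial) := by
  rw [← (add_left_injective b).hasSum_iff]
  · have h : HasSum (fun y : ℕ => ((1 - α) * μ) ^ y / y.factorial)
        (Real.exp ((1 - α) * μ)) := by
      rw [Real.exp_eq_exp_ℝ]
      exact NormedSpace.expSeries_div_hasSum_exp _
    have h' := h.mul_left (Real.exp (-μ) * (α * μ) ^ b / b.factorial)
    convert h' using 1
    · rfl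
    · funext y
      have hc : ((y + b).choose b : ℝ) * (y.factorial * b.factorial) = (y + b).factorial := by
        rw [← mul_assoc]
        exact_mod_cast Nat.add_choose_mul_factorial_mul_factorial y b
      have hy : (y.factorial : ℝ) ≠ 0 := by positivity
      have hb : (b.factorial : ℝ) ≠ 0 := by positivity
      have hyb : ((y + b).choose b : ℝ) ≠ 0 := by
        exact_mod_cast (Nat.choose_pos (Nat.le_add_left b y)).ne'
      simp only [Function.comp_apply, Nat.add_sub_cancel]
      rw [← hc, mul_pow (1 - α) μ y]
      field_simp
      ring
    · have : Real.exp (-(α * μ)) = Real.exp (-μ) * Real.exp ((1 - α) * μ) := by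
        rw [← Real.exp_add]
        ring_nf
      rw [this]
      ring
  · intro x hx
    have hxb : x < b := by
      by_contra hle
      exact hx ⟨x - b, Nat.sub_add_cancel (not_lt.mp hle)⟩
    simp [Nat.choose_eq_zero_of_lt hxb]

/-- The convolution of two Poisson laws is Poisson, by the binomial theorem. -/
lemma sum_poisson_convolution (r s : ℝ) (m : ℕ) :
    ∑ b ∈ Finset.range (m + 1), Real.exp (-r) * r ^ b / b.factorial *
        (Real.exp (-s) * s ^ (m - b) / (m - b).factorial) =
      Real.exp (-(r + s)) * (r + s) ^ m / m.factorial := by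
  rw [add_pow, Finset.mul_sum, Finset.sum_div]
  refine Finset.sum_congr rfl fun b hb => ?_
  have hbm : b ≤ m := Nat.lt_succ_iff.mp (Finset.mem_range.mp hb)
  rw [Nat.cast_choose ℝ hbm, neg_add, Real.exp_add]
  have hm : (m.factorial : ℝ) ≠ 0 := by positivity
  field_simp

/-- The Poisson distribution with mean `lam/(1-α)` is invariant for the transition
kernel of an INAR(1) process with Bernoulli(α) thinning and Poisson(lam) innovations:
given state `x`, the next state is `Binomial(x, α) + Poisson(lam)` (independent), so the
transition probability `κ x m` is the convolution written out explicitly below. -/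
theorem stmt_2 (lam α : ℝ) (hlam : 0 < lam) (hα : α ∈ Set.Ioo (0 : ℝ) 1)
    (piDist : ℕ → ℝ) (κ : ℕ → ℕ → ℝ)
    (hπ : ∀ n : ℕ, piDist n =
      Real.exp (-(lam / (1 - α))) * (lam / (1 - α)) ^ n / n.factorial)
    (hκ : ∀ x m : ℕ, κ x m =
      ∑ b ∈ Finset.range (m + 1),
        (x.choose b : ℝ) * α ^ b * (1 - α) ^ (x - b) *
          (Real.exp (-lam) * lam ^ (m - b) / (m - b).factorial)) :
    ∀ m : ℕ, ∑' x : ℕ, piDist x * κ x m = piDist m := by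
  intro m
  have h1α : 1 - α ≠ 0 := (sub_pos.mpr hα.2).ne'
  have hfix : α * (lam / (1 - α)) + lam = lam / (1 - α) := by
    field_simp
    ring
  have h := hasSum_sum (s := Finset.range (m + 1)) fun b _ =>
    (hasSum_poisson_thinning (lam / (1 - α)) α b).mul_right
      (Real.exp (-lam) * lam ^ (m - b) / (m - b).factorial)
  rw [sum_poisson_convolution, hfix, ← hπ] at h
  rw [← h.tsum_eq]
  refine tsum_congr fun x => ?_
  rw [hκ, hπ, Finset.mul_sum]
  exact Finset.sum_congr rfl fun b _ => by ring
end

section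
/- Let λ > 0 and let μ be a Borel probability measure on the interval (0,1). Then (∫_{(0,1)} e^{−λ/(1−a)} dμ(a))² ≤ (∫_{(0,1)} (1−a) e^{−λ/(1−a)} dμ(a)) · (∫_{(0,1)} (1−a)^{−1} e^{−λ/(1−a)} dμ(a)), and equality holds if and only if μ is a Dirac measure concentrated at some point of (0,1). -/
/-!
Write `w a = exp (-(lam / (1 - a)))`, and let `M`, `P`, `Q` be the integrals of `(1 - a) * w a`,
`w a` and `(1 - a)⁻¹ * w a`. This is Cauchy–Schwarz, made quantitative by the identity
`∫ (1 - a)⁻¹ * w a * (M - P * (1 - a)) ^ 2 ∂μ = M * (M * Q - P ^ 2)`.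
Since `M > 0` and the integrand is nonnegative on `(0, 1)`, the inequality follows. Equality forces
`1 - a = M / P` almost everywhere, so `μ` is the Dirac mass at `1 - M / P`.
-/

open MeasureTheory

/-- With `u = (1 - a)⁻¹` this bounds the integrand `(1 - a)⁻¹ * exp (-(lam / (1 - a)))`; it holds
because `lam * u ≤ exp (lam * u)`. -/
lemma inv_mul_exp_le {lam : ℝ} (hlam : 0 < lam) (u : ℝ) :
    u * Real.exp (-(lam * u)) ≤ lam⁻¹ := by
  have h1 : lam * u ≤ Real.exp (lam * u) := by linarith [Real.add_one_le_exp (lam * u)]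
  rw [Real.exp_neg, ← div_eq_mul_inv, div_le_iff₀ (Real.exp_pos _), inv_mul_eq_div,
    le_div_iff₀ hlam]
  linarith

lemma eq_dirac_of_ae_eq {μ : Measure ℝ} [IsProbabilityMeasure μ] {c : ℝ}
    (h : ∀ᵐ a ∂μ, a = c) : μ = Measure.dirac c := by
  have h' : (id : ℝ → ℝ) =ᵐ[μ] fun _ => c := h
  have h2 : μ.map id = μ.map fun _ => c := Measure.map_congr h'
  rwa [Measure.map_id, Measure.map_const, measure_univ, one_smul] at h2

theorem stmt_3 (lam : ℝ) (hlam : 0 < lam)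
    (μ : MeasureTheory.Measure ℝ) [MeasureTheory.IsProbabilityMeasure μ]
    (hsupp : μ (Set.Ioo (0 : ℝ) 1) = 1) :
    (∫ a in Set.Ioo (0 : ℝ) 1, Real.exp (-(lam / (1 - a))) ∂μ) ^ 2 ≤
        (∫ a in Set.Ioo (0 : ℝ) 1, (1 - a) * Real.exp (-(lam / (1 - a))) ∂μ) *
          (∫ a in Set.Ioo (0 : ℝ) 1, (1 - a)⁻¹ * Real.exp (-(lam / (1 - a))) ∂μ) ∧
      ((∫ a in Set.Ioo (0 : ℝ) 1, Real.exp (-(lam / (1 - a))) ∂μ) ^ 2 =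
          (∫ a in Set.Ioo (0 : ℝ) 1, (1 - a) * Real.exp (-(lam / (1 - a))) ∂μ) *
            (∫ a in Set.Ioo (0 : ℝ) 1, (1 - a)⁻¹ * Real.exp (-(lam / (1 - a))) ∂μ) ↔
        ∃ c ∈ Set.Ioo (0 : ℝ) 1, μ = MeasureTheory.Measure.dirac c) := by
  have hae : ∀ᵐ a ∂μ, a ∈ Set.Ioo (0 : ℝ) 1 :=
    (mem_ae_iff_prob_eq_one measurableSet_Ioo).2 hsupp
  rw [Measure.restrict_eq_self_of_ae_mem hae]
  have hw : ∀ a ∈ Set.Ioo (0 : ℝ) 1, Real.exp (-(lam / (1 - a))) ≤ 1 := by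
    intro a ha
    rw [Real.exp_le_one_iff, neg_nonpos]
    exact div_nonneg hlam.le (by linarith [ha.2])
  have iP : Integrable (fun a => Real.exp (-(lam / (1 - a)))) μ := by
    refine Integrable.of_bound (Measurable.aestronglyMeasurable (by fun_prop)) 1 ?_
    filter_upwards [hae] with a ha
    rw [Real.norm_of_nonneg (Real.exp_pos _).le]
    exact hw a ha
  have iM : Integrable (fun a => (1 - a) * Real.exp (-(lam / (1 - a)))) μ := by
    refine Integrable.of_bound (Measurable.aestronglyMeasurable (by fun_prop)) 1 ?_
    filter_upwards [hae] with a ha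
    have h1 : 0 ≤ 1 - a := by linarith [ha.2]
    rw [Real.norm_of_nonneg (mul_nonneg h1 (Real.exp_pos _).le)]
    exact mul_le_one₀ (by linarith [ha.1]) (Real.exp_pos _).le (hw a ha)
  have iQ : Integrable (fun a => (1 - a)⁻¹ * Real.exp (-(lam / (1 - a)))) μ := by
    refine Integrable.of_bound (Measurable.aestronglyMeasurable (by fun_prop)) lam⁻¹ ?_
    filter_upwards [hae] with a ha
    have h1 : 0 ≤ 1 - a := by linarith [ha.2]
    rw [Real.norm_of_nonneg (mul_nonneg (inv_nonneg.2 h1) (Real.exp_pos _).le), div_eq_mul_inv]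
    exact inv_mul_exp_le hlam _
  have hPpos : 0 < ∫ a, Real.exp (-(lam / (1 - a))) ∂μ := integral_exp_pos iP
  have hMpos : 0 < ∫ a, (1 - a) * Real.exp (-(lam / (1 - a))) ∂μ := by
    have h0 : 0 ≤ᵐ[μ] fun a => (1 - a) * Real.exp (-(lam / (1 - a))) := by
      filter_upwards [hae] with a ha
      exact mul_nonneg (by linarith [ha.2]) (Real.exp_pos _).le
    refine lt_of_le_of_ne (integral_nonneg_of_ae h0) fun h => ?_
    have h1 := (integral_eq_zero_iff_of_nonneg_ae h0 iM).1 h.symm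
    obtain ⟨a, ha, hz⟩ := (hae.and h1).exists
    have : 0 < (1 - a) * Real.exp (-(lam / (1 - a))) :=
      mul_pos (by linarith [ha.2]) (Real.exp_pos _)
    exact this.ne' hz
  set P := ∫ a, Real.exp (-(lam / (1 - a))) ∂μ with hP
  set M := ∫ a, (1 - a) * Real.exp (-(lam / (1 - a))) ∂μ with hM
  set Q := ∫ a, (1 - a)⁻¹ * Real.exp (-(lam / (1 - a))) ∂μ with hQ
  have hexp : (fun a => (1 - a)⁻¹ * Real.exp (-(lam / (1 - a))) * (M - P * (1 - a)) ^ 2) =ᵐ[μ]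
      fun a => M ^ 2 * ((1 - a)⁻¹ * Real.exp (-(lam / (1 - a))))
        - 2 * M * P * Real.exp (-(lam / (1 - a)))
        + P ^ 2 * ((1 - a) * Real.exp (-(lam / (1 - a)))) := by
    filter_upwards [hae] with a ha
    have h1 : 1 - a ≠ 0 := by linarith [ha.2]
    generalize Real.exp (-(lam / (1 - a))) = w
    field_simp
    ring
  have iF : Integrable
      (fun a => (1 - a)⁻¹ * Real.exp (-(lam / (1 - a))) * (M - P * (1 - a)) ^ 2) μ :=
    (integrable_congr hexp).2
      (((iQ.const_mul _).sub (iP.const_mul _)).add (iM.const_mul _))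
  have hF : ∫ a, (1 - a)⁻¹ * Real.exp (-(lam / (1 - a))) * (M - P * (1 - a)) ^ 2 ∂μ
      = M * (M * Q - P ^ 2) := by
    rw [integral_congr_ae hexp,
      integral_add (by exact (iQ.const_mul _).sub (iP.const_mul _)) (iM.const_mul _),
      integral_sub (iQ.const_mul _) (iP.const_mul _), integral_const_mul, integral_const_mul,
      integral_const_mul, ← hP, ← hM, ← hQ]
    ring
  have hF0 : 0 ≤ᵐ[μ]
      fun a => (1 - a)⁻¹ * Real.exp (-(lam / (1 - a))) * (M - P * (1 - a)) ^ 2 := by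
    filter_upwards [hae] with a ha
    have h1 : 0 ≤ 1 - a := by linarith [ha.2]
    simp only [Pi.zero_apply]
    positivity
  constructor
  · have h := integral_nonneg_of_ae hF0
    rw [hF] at h
    linarith [nonneg_of_mul_nonneg_right h hMpos]
  · constructor
    · intro heq
      rw [heq, sub_self, mul_zero, integral_eq_zero_iff_of_nonneg_ae hF0 iF] at hF
      have hc : ∀ᵐ a ∂μ, a = 1 - M / P := by
        filter_upwards [hae, hF] with a ha hz
        have h1 : 0 < 1 - a := by linarith [ha.2]
        have h2 : 0 < (1 - a)⁻¹ * Real.exp (-(lam / (1 - a))) := by positivity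
        have h3 := pow_eq_zero_iff (two_ne_zero) |>.1 ((mul_eq_zero.1 hz).resolve_left h2.ne')
        field_simp
        linarith
      obtain ⟨a, ha, hac⟩ := (hae.and hc).exists
      exact ⟨1 - M / P, hac ▸ ha, eq_dirac_of_ae_eq hc⟩
    · rintro ⟨c, hc, hμ⟩
      have h1 : 1 - c ≠ 0 := by linarith [hc.2]
      rw [hP, hM, hQ, hμ, integral_dirac, integral_dirac, integral_dirac]
      generalize Real.exp (-(lam / (1 - c))) = w
      field_simp
end

section
/- Let α ∈ (0,1) and let s, t be real numbers with 0 ≤ s ≤ t. Then lim_{n→∞} (1/n) Σ_{k=1}^{⌊ns⌋} Σ_{ℓ=1}^{⌊nt⌋} α^{|ℓ−k|} = ((1+α)/(1−α)) · s. -/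
/-! For `1 ≤ k ≤ N`, two geometric sums give
`(1 - α) * ∑ ℓ ∈ Icc 1 N, α ^ |ℓ - k| = 1 + α - α ^ k - α ^ (N - k + 1)`.
Summing over `k ≤ M ≤ N` yields a closed form for the double sum whose leading term is
`M * (1 + α) / (1 - α)`, with a remainder bounded uniformly in `M` and `N`
(`abs_double_sum_sub_le`). Dividing by `n` with `M = ⌊n s⌋` kills the remainder, and
`⌊n s⌋ / n → s`. -/

lemma sum_pow_left (α : ℝ) (k : ℕ) :
    (1 - α) * ∑ ℓ ∈ Finset.Icc 1 k, α ^ ((ℓ : ℤ) - k).natAbs = 1 - α ^ k := by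
  induction k with
  | zero => simp
  | succ k ih =>
    have h : ∑ ℓ ∈ Finset.Icc 1 k, α ^ ((ℓ : ℤ) - (k + 1 : ℕ)).natAbs
        = α * ∑ ℓ ∈ Finset.Icc 1 k, α ^ ((ℓ : ℤ) - k).natAbs := by
      rw [Finset.mul_sum]
      refine Finset.sum_congr rfl fun ℓ hℓ => ?_
      rw [Finset.mem_Icc] at hℓ
      rw [← pow_succ']
      congr 1
      omega
    rw [Finset.sum_Icc_succ_top (by omega), h, sub_self, Int.natAbs_zero]
    linear_combination α * ih

lemma sum_pow_inner (α : ℝ) (k j : ℕ) :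
    (1 - α) * ∑ ℓ ∈ Finset.Icc 1 (k + j), α ^ ((ℓ : ℤ) - k).natAbs
      = 1 + α - α ^ k - α ^ (j + 1) := by
  induction j with
  | zero => rw [add_zero, sum_pow_left]; ring
  | succ j ih =>
    have e : (((k + j + 1 : ℕ) : ℤ) - k).natAbs = j + 1 := by omega
    rw [← add_assoc, Finset.sum_Icc_succ_top (by omega), e]
    linear_combination ih

lemma double_sum_eq (α : ℝ) (M j : ℕ) :
    (1 - α) ^ 2 * ∑ k ∈ Finset.Icc 1 M, ∑ ℓ ∈ Finset.Icc 1 (M + j), α ^ ((ℓ : ℤ) - k).natAbs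
      = M * ((1 - α) * (1 + α)) - α * (1 - α ^ M) - α ^ (j + 1) * (1 - α ^ M) := by
  -- The upper limit `M + j` of the inner sum stays fixed while `M` decreases.
  induction M generalizing j with
  | zero => simp
  | succ M ih =>
    have h1 := ih (j + 1)
    have h2 := sum_pow_inner α (M + 1) j
    rw [show M + (j + 1) = M + 1 + j by ring] at h1
    rw [Finset.sum_Icc_succ_top (by omega)]
    push_cast at h1 h2 ⊢
    linear_combination h1 + (1 - α) * h2

lemma abs_double_sum_sub_le {α : ℝ} (hα : α ∈ Set.Ioo (0 : ℝ) 1) {M N : ℕ} (h : M ≤ N) :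
    |∑ k ∈ Finset.Icc 1 M, ∑ ℓ ∈ Finset.Icc 1 N, α ^ ((ℓ : ℤ) - k).natAbs
      - (1 + α) / (1 - α) * M| ≤ 2 / (1 - α) ^ 2 := by
  obtain ⟨h0, h1⟩ := hα
  obtain ⟨j, rfl⟩ := Nat.exists_eq_add_of_le h
  have hp : 0 < 1 - α := by linarith
  have key := double_sum_eq α M j
  set D := ∑ k ∈ Finset.Icc 1 M, ∑ ℓ ∈ Finset.Icc 1 (M + j), α ^ ((ℓ : ℤ) - k).natAbs
  have e : D - (1 + α) / (1 - α) * M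
      = -((α + α ^ (j + 1)) * (1 - α ^ M)) / (1 - α) ^ 2 := by
    field_simp
    linear_combination key
  have a0 : 0 ≤ α ^ M := by positivity
  have a1 : α ^ M ≤ 1 := pow_le_one₀ h0.le h1.le
  have b0 : 0 ≤ α ^ (j + 1) := by positivity
  have b1 : α ^ (j + 1) ≤ 1 := pow_le_one₀ h0.le h1.le
  rw [e, abs_div, abs_neg, abs_of_pos (by positivity : 0 < (1 - α) ^ 2),
    abs_of_nonneg (mul_nonneg (by linarith) (by linarith))]
  gcongr
  nlinarith

theorem stmt_6 (α : ℝ) (hα : α ∈ Set.Ioo (0 : ℝ) 1) (s t : ℝ)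
    (hs : 0 ≤ s) (hst : s ≤ t) :
    Filter.Tendsto
      (fun n : ℕ =>
        (1 / (n : ℝ)) *
          ∑ k ∈ Finset.Icc 1 ⌊(n : ℝ) * s⌋₊, ∑ ℓ ∈ Finset.Icc 1 ⌊(n : ℝ) * t⌋₊,
            α ^ ((ℓ : ℤ) - k).natAbs)
      Filter.atTop (nhds (((1 + α) / (1 - α)) * s)) := by
  have hfloor : Filter.Tendsto (fun n : ℕ => (⌊(n : ℝ) * s⌋₊ : ℝ) / n) Filter.atTop (nhds s) := by
    have := (tendsto_nat_floor_mul_div_atTop hs).comp (tendsto_natCast_atTop_atTop (R := ℝ))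
    simpa [Function.comp_def, mul_comm] using this
  have hmain := hfloor.const_mul ((1 + α) / (1 - α))
  have hbound : Filter.Tendsto (fun n : ℕ => 2 / (1 - α) ^ 2 / (n : ℝ)) Filter.atTop (nhds 0) :=
    tendsto_const_div_atTop_nhds_zero_nat _
  refine tendsto_of_tendsto_of_dist hmain (squeeze_zero (fun _ => dist_nonneg) (fun n => ?_) hbound)
  have hle : ⌊(n : ℝ) * s⌋₊ ≤ ⌊(n : ℝ) * t⌋₊ := by gcongr
  have h := abs_double_sum_sub_le hα hle
  rw [dist_comm, Real.dist_eq, one_div_mul_eq_div, ← mul_div_assoc, ← sub_div, abs_div,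
    Nat.abs_cast]
  gcongr
end

section
/- Let λ > 0 and k ∈ ℕ. On a probability space let α be a random variable with values in (0,1) such that E(1/(1−α)) < ∞, and let X₀, X_k be ℕ-valued random variables such that, almost surely, for all real z₀, z_k ∈ [−1,1], E( z₀^{X₀} z_k^{X_k} | σ(α) ) = exp{ (λ/(1−α)) [ α^k (z₀−1)(z_k−1) + (z₀−1) + (z_k−1) ] }. Then the random variable (X₀ − λ/(1−α))(X_k − λ/(1−α)) is integrable and E[ (X₀ − λ/(1−α)) (X_k − λ/(1−α)) ] = λ E( α^k / (1−α) ). -/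
/-!
Write `M = λ/(1-α)`. The moments are read off from the generating function at `z = 1 - t`, `t ↓ 0`,
through the difference quotient `U_t(X) = (e^{-Mt} - (1-t)^X)/t`, which converges to `X - M`.
Since `E((1-t)^X | α) = e^{-Mt}`, it is exactly conditionally centred, and the joint generating
function gives `E(U_t(X₀) U_t(X_k) | α) = R_t(α^k)` with
`R_t(c) = e^{-2Mt} (e^{Mct²} - 1)/t²`, where `0 ≤ R_t(c) ≤ Mc` and `R_t(c) → Mc`.
The diagonal case `X₀ = X_k` has the same form with `c = 1`, because `-2t + t² = (1-t)² - 1`.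

* Fatou's lemma in the diagonal case gives `E (X - M)² ≤ E M < ∞`, so `X₀ - M` and `X_k - M` lie
  in `L²` and their product is integrable (`memLp_sub`).
* `E M²` may be infinite, so `U_t(X₀) U_t(X_k)` has no evident integrable majorant. On the event
  `{M ≤ n} ∈ σ(α)`, however, it is dominated by `(X₀ + M)(X_k + M)`, which is integrable there.
  Dominated convergence gives the covariance identity on `{M ≤ n}`, and `n → ∞` concludes
  (`integral_mul_sub`).
-/

open MeasureTheory Filter Topology

namespace INARCov

/-! ### Difference quotients of the generating function -/

/-- The difference quotient `(e^{-Mt} - (1-t)^x)/t`, an approximation of `x - M` for small `t`. -/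
noncomputable def U (t M : ℝ) (x : ℕ) : ℝ := (Real.exp (-(M * t)) - (1 - t) ^ x) / t

/-- The conditional covariance of two difference quotients `U t M`, when the cross term of the
joint generating function has coefficient `M * c`. -/
noncomputable def R (t M c : ℝ) : ℝ :=
  Real.exp (-(2 * M * t)) * ((Real.exp (M * c * t ^ 2) - 1) / t ^ 2)

lemma abs_U_le {t M : ℝ} (ht : 0 < t) (ht1 : t ≤ 1) (hM : 0 ≤ M) (x : ℕ) :
    |U t M x| ≤ x + M := by
  have h1 : 1 - M * t ≤ Real.exp (-(M * t)) := by
    have := Real.add_one_le_exp (-(M * t)); linarith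
  have h2 : Real.exp (-(M * t)) ≤ 1 := Real.exp_le_one_iff.2 (by nlinarith)
  have h3 : 1 + (x : ℝ) * ((1 - t) - 1) ≤ (1 - t) ^ x := one_add_mul_sub_le_pow (by linarith) x
  have h4 : (1 - t) ^ x ≤ 1 := pow_le_one₀ (by linarith) (by linarith)
  have h5 : 0 ≤ (x : ℝ) * t := by positivity
  have h6 : 0 ≤ M * t := by positivity
  rw [U, abs_div, abs_of_pos ht, div_le_iff₀ ht, abs_le]
  constructor <;> nlinarith

lemma R_nonneg {t M c : ℝ} (hM : 0 ≤ M) (hc : 0 ≤ c) : 0 ≤ R t M c := by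
  have : 1 ≤ Real.exp (M * c * t ^ 2) := Real.one_le_exp (by positivity)
  have : 0 ≤ Real.exp (M * c * t ^ 2) - 1 := by linarith
  unfold R; positivity

lemma R_le {t M c : ℝ} (ht : 0 < t) (ht1 : t ≤ 1) (hM : 0 ≤ M) (hc : 0 ≤ c) (hc1 : c ≤ 1) :
    R t M c ≤ M * c := by
  have ht2 : 0 < t ^ 2 := by positivity
  -- `e^s - 1 ≤ s e^s`, and the factor `e^{Mct²}` is absorbed by `e^{-2Mt}` since `ct² ≤ 2t`.
  have h1 : Real.exp (M * c * t ^ 2) - 1 ≤ M * c * t ^ 2 * Real.exp (M * c * t ^ 2) := by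
    have h := Real.add_one_le_exp (-(M * c * t ^ 2))
    have h' := mul_le_mul_of_nonneg_right h (Real.exp_pos (M * c * t ^ 2)).le
    rw [← Real.exp_add, neg_add_cancel, Real.exp_zero] at h'
    linarith
  have h2 : (Real.exp (M * c * t ^ 2) - 1) / t ^ 2 ≤ M * c * Real.exp (M * c * t ^ 2) := by
    rw [div_le_iff₀ ht2]; linarith
  have h3 : Real.exp (-(2 * M * t)) * Real.exp (M * c * t ^ 2) ≤ 1 := by
    rw [← Real.exp_add, Real.exp_le_one_iff]
    have : c * t ^ 2 ≤ 2 * t := by nlinarith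
    nlinarith
  calc R t M c ≤ Real.exp (-(2 * M * t)) * (M * c * Real.exp (M * c * t ^ 2)) :=
        mul_le_mul_of_nonneg_left h2 (Real.exp_pos _).le
    _ = M * c * (Real.exp (-(2 * M * t)) * Real.exp (M * c * t ^ 2)) := by ring
    _ ≤ M * c * 1 := mul_le_mul_of_nonneg_left h3 (by positivity)
    _ = M * c := mul_one _

lemma tendsto_U (M : ℝ) (x : ℕ) : Tendsto (fun t => U t M x) (𝓝[≠] 0) (𝓝 (x - M)) := by
  have h : HasDerivAt (fun t : ℝ => Real.exp (-(M * t)) - (1 - t) ^ x) (x - M) 0 := by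
    have h1 : HasDerivAt (fun t : ℝ => Real.exp (-(M * t))) (-M) 0 := by
      simpa using ((hasDerivAt_id (0 : ℝ)).const_mul M).neg.exp
    have h2 : HasDerivAt (fun t : ℝ => (1 - t) ^ x) (-x) 0 := by
      simpa using ((hasDerivAt_id (0 : ℝ)).const_sub 1).fun_pow x
    exact (h1.sub h2).congr_deriv (by ring)
  refine h.tendsto_slope_zero.congr fun t => ?_
  simp [U, div_eq_inv_mul]

lemma tendsto_R (M c : ℝ) : Tendsto (fun t => R t M c) (𝓝[≠] 0) (𝓝 (M * c)) := by
  have h : HasDerivAt (fun s : ℝ => Real.exp (M * c * s)) (M * c) 0 := by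
    simpa using ((hasDerivAt_id (0 : ℝ)).const_mul (M * c)).exp
  have hsq : Tendsto (fun t : ℝ => t ^ 2) (𝓝[≠] 0) (𝓝[≠] 0) := by
    refine tendsto_nhdsWithin_iff.2 ⟨?_, ?_⟩
    · exact ((continuous_pow 2).tendsto' (0 : ℝ) 0 (by simp)).mono_left nhdsWithin_le_nhds
    · filter_upwards [self_mem_nhdsWithin] with t ht
      exact pow_ne_zero 2 ht
  have h1 := h.tendsto_slope_zero.comp hsq
  have h2 : Tendsto (fun t : ℝ => Real.exp (-(2 * M * t))) (𝓝[≠] 0) (𝓝 1) :=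
    (Continuous.tendsto' (by fun_prop) (0 : ℝ) 1 (by simp)).mono_left nhdsWithin_le_nhds
  have h3 := h2.mul h1
  rw [one_mul] at h3
  refine h3.congr fun t => ?_
  simp [R, div_eq_inv_mul]

/-- The sequence `1/(n+1)` along which `t ↓ 0`. -/
noncomputable def T (n : ℕ) : ℝ := 1 / ((n : ℝ) + 1)

lemma T_pos (n : ℕ) : 0 < T n := by unfold T; positivity

lemma T_le_one (n : ℕ) : T n ≤ 1 := by
  unfold T
  rw [div_le_one (by positivity)]
  have : (0 : ℝ) ≤ n := by positivity
  linarith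

lemma tendsto_T : Tendsto T atTop (𝓝[≠] 0) :=
  tendsto_nhdsWithin_iff.2
    ⟨tendsto_one_div_add_atTop_nhds_zero_nat, Eventually.of_forall fun n => (T_pos n).ne'⟩

/-! ### Conditional covariance of the difference quotients -/

variable {Ω : Type*} {m mΩ : MeasurableSpace Ω} {μ : Measure Ω}

lemma setIntegral_mul_condExp [IsFiniteMeasure μ] (hm : m ≤ mΩ) {g B f : Ω → ℝ}
    (hg : StronglyMeasurable[m] g) (hg1 : ∀ ω, |g ω| ≤ 1) (hB : Integrable B μ)
    (h : μ[B | m] =ᵐ[μ] f) {A : Set Ω} (hA : MeasurableSet[m] A) :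
    ∫ ω in A, g ω * B ω ∂μ = ∫ ω in A, g ω * f ω ∂μ := by
  have hgB : Integrable (g * B) μ :=
    hB.bdd_mul (hg.mono hm).aestronglyMeasurable (ae_of_all _ hg1)
  have h1 := condExp_mul_of_stronglyMeasurable_left hg hgB hB
  have h2 := setIntegral_condExp hm hgB hA
  rw [show (∫ ω in A, g ω * B ω ∂μ) = ∫ ω in A, (g * B) ω ∂μ from rfl, ← h2]
  refine integral_congr_ae (ae_restrict_of_ae ?_)
  filter_upwards [h1, h] with ω h1 h
  rw [h1, Pi.mul_apply, h]

lemma integrable_of_abs_le_one [IsFiniteMeasure μ] {f : Ω → ℝ} (hf : Measurable f)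
    (h : ∀ ω, |f ω| ≤ 1) : Integrable f μ :=
  Integrable.of_bound hf.aestronglyMeasurable 1 (ae_of_all _ h)

lemma measurable_pow_nat {X : Ω → ℕ} (hX : Measurable X) (z : ℝ) :
    Measurable fun ω => z ^ X ω :=
  (measurable_of_countable fun n : ℕ => z ^ n).comp hX

lemma abs_pow_le_one {z : ℝ} (h0 : 0 ≤ z) (h1 : z ≤ 1) (n : ℕ) : |z ^ n| ≤ 1 := by
  rw [abs_of_nonneg (pow_nonneg h0 n)]; exact pow_le_one₀ h0 h1

lemma measurable_U {M : Ω → ℝ} (hM : Measurable M) {X : Ω → ℕ} (hX : Measurable X) (t : ℝ) :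
    Measurable fun ω => U t (M ω) (X ω) := by
  have := measurable_pow_nat hX (1 - t)
  unfold U; fun_prop

lemma measurable_R {M c : Ω → ℝ} (hM : Measurable M) (hc : Measurable c) (t : ℝ) :
    Measurable fun ω => R t (M ω) (c ω) := by
  unfold R; fun_prop

/-- The integrated form of `E(U_t(X) U_t(Y) | m) = R_t(c)`. -/
lemma setIntegral_U_mul_U [IsProbabilityMeasure μ] (hm : m ≤ mΩ) {M c : Ω → ℝ}
    (hM : Measurable[m] M) (hM0 : ∀ ω, 0 ≤ M ω) (hc : Measurable c)
    (hc1 : ∀ ω, c ω ≤ 1) {X Y : Ω → ℕ} (hX : Measurable X)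
    (hY : Measurable Y) {t : ℝ} (ht : 0 < t) (ht1 : t ≤ 1)
    (hgX : μ[fun ω => (1 - t) ^ X ω | m] =ᵐ[μ] fun ω => Real.exp (-(M ω * t)))
    (hgY : μ[fun ω => (1 - t) ^ Y ω | m] =ᵐ[μ] fun ω => Real.exp (-(M ω * t)))
    (hgXY : μ[fun ω => (1 - t) ^ X ω * (1 - t) ^ Y ω | m] =ᵐ[μ]
      fun ω => Real.exp (M ω * (c ω * t ^ 2 - 2 * t)))
    {A : Set Ω} (hA : MeasurableSet[m] A) :
    ∫ ω in A, U t (M ω) (X ω) * U t (M ω) (Y ω) ∂μ = ∫ ω in A, R t (M ω) (c ω) ∂μ := by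
  have hM' : Measurable M := hM.mono hm le_rfl
  have hpX := measurable_pow_nat hX (1 - t)
  have hpY := measurable_pow_nat hY (1 - t)
  have bX := fun ω => abs_pow_le_one (z := 1 - t) (by linarith) (by linarith) (X ω)
  have bY := fun ω => abs_pow_le_one (z := 1 - t) (by linarith) (by linarith) (Y ω)
  set e : Ω → ℝ := fun ω => Real.exp (-(M ω * t)) with he
  have hem : StronglyMeasurable[m] e :=
    (Real.measurable_exp.comp (hM.mul_const t).neg).stronglyMeasurable
  have hem' : Measurable e := by fun_prop
  have be : ∀ ω, |e ω| ≤ 1 := fun ω => by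
    rw [abs_of_pos (Real.exp_pos _), Real.exp_le_one_iff]
    have := mul_nonneg (hM0 ω) ht.le
    linarith
  have bmul : ∀ {a b : ℝ}, |a| ≤ 1 → |b| ≤ 1 → |a * b| ≤ 1 := fun {a b} ha hb => by
    rw [abs_mul]; exact mul_le_one₀ ha (abs_nonneg b) hb
  have iX := integrable_of_abs_le_one (μ := μ) hpX bX
  have iY := integrable_of_abs_le_one (μ := μ) hpY bY
  have iXY := integrable_of_abs_le_one (μ := μ) (hpX.mul hpY) fun ω => bmul (bX ω) (bY ω)
  have ieX := integrable_of_abs_le_one (μ := μ) (hem'.mul hpX) fun ω => bmul (be ω) (bX ω)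
  have ieY := integrable_of_abs_le_one (μ := μ) (hem'.mul hpY) fun ω => bmul (be ω) (bY ω)
  have iee := integrable_of_abs_le_one (μ := μ) (hem'.mul hem') fun ω => bmul (be ω) (be ω)
  have iE : Integrable (fun ω => Real.exp (M ω * (c ω * t ^ 2 - 2 * t))) μ := by
    refine integrable_of_abs_le_one (by fun_prop) fun ω => ?_
    rw [abs_of_pos (Real.exp_pos _), Real.exp_le_one_iff]
    have : c ω * t ^ 2 ≤ 2 * t := by nlinarith [hc1 ω]
    nlinarith [hM0 ω]
  have e1 := setIntegral_mul_condExp hm hem be iX hgX hA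
  have e2 := setIntegral_mul_condExp hm hem be iY hgY hA
  have e3 := setIntegral_mul_condExp hm (g := fun _ => 1) stronglyMeasurable_const
    (by simp) iXY hgXY hA
  simp only [one_mul] at e3
  have expand : ∀ ω, U t (M ω) (X ω) * U t (M ω) (Y ω) = (t ^ 2)⁻¹ *
      (e ω * e ω - e ω * (1 - t) ^ X ω - e ω * (1 - t) ^ Y ω
        + (1 - t) ^ X ω * (1 - t) ^ Y ω) := fun ω => by
    simp only [U, he]; field_simp; ring
  have expandR : ∀ ω, R t (M ω) (c ω) = (t ^ 2)⁻¹ *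
      (e ω * e ω - e ω * e ω - e ω * e ω + Real.exp (M ω * (c ω * t ^ 2 - 2 * t))) := fun ω => by
    have a1 : e ω * e ω = Real.exp (-(2 * M ω * t)) := by
      simp only [he]; rw [← Real.exp_add]; ring_nf
    have a2 : Real.exp (M ω * (c ω * t ^ 2 - 2 * t))
        = Real.exp (-(2 * M ω * t)) * Real.exp (M ω * c ω * t ^ 2) := by
      rw [← Real.exp_add]; ring_nf
    rw [a1, a2, R]; field_simp; ring
  simp_rw [expand, expandR]
  rw [integral_const_mul, integral_const_mul]
  congr 1
  rw [integral_add, integral_sub, integral_sub, integral_add, integral_sub, integral_sub, e1, e2]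
  · congr 1
  all_goals first
    | exact iee.integrableOn | exact ieX.integrableOn | exact ieY.integrableOn
    | exact iXY.integrableOn | exact iE.integrableOn
    | exact (iee.sub iee).integrableOn | exact (iee.sub ieX).integrableOn
    | exact ((iee.sub iee).sub iee).integrableOn | exact ((iee.sub ieX).sub ieY).integrableOn

lemma integrable_U_mul_U [IsProbabilityMeasure μ] {M : Ω → ℝ} (hM : Measurable M)
    (hM0 : ∀ ω, 0 ≤ M ω) {X : Ω → ℕ} (hX : Measurable X) {t : ℝ} (ht : 0 < t) (ht1 : t ≤ 1) :
    Integrable (fun ω => U t (M ω) (X ω) * U t (M ω) (X ω)) μ := by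
  have hU := measurable_U hM hX t
  refine Integrable.of_bound (hU.mul hU).aestronglyMeasurable ((1 / t) * (1 / t))
    (ae_of_all _ fun ω => ?_)
  have h : |U t (M ω) (X ω)| ≤ 1 / t := by
    rw [U, abs_div, abs_of_pos ht]
    refine div_le_div_of_nonneg_right ?_ ht.le
    have h2 : Real.exp (-(M ω * t)) ≤ 1 := by
      rw [Real.exp_le_one_iff]
      have := mul_nonneg (hM0 ω) ht.le
      linarith
    have h3 := Real.exp_pos (-(M ω * t))
    have h4 : (1 - t) ^ X ω ≤ 1 := pow_le_one₀ (by linarith) (by linarith)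
    have h5 : 0 ≤ (1 - t) ^ X ω := pow_nonneg (by linarith) _
    rw [abs_le]; constructor <;> linarith
  rw [Real.norm_eq_abs, abs_mul]
  exact mul_le_mul h h (abs_nonneg _) (by positivity)

/-! ### Passage to the limit -/

/-- A count with conditional generating function `e^{-Mt}` at `1 - t` (conditionally Poisson with
mean `M`) has `X - M ∈ L²` as soon as `M` is integrable, even if `X` itself is not in `L²`. -/
lemma memLp_sub [IsProbabilityMeasure μ] (hm : m ≤ mΩ) {M : Ω → ℝ}
    (hM : Measurable[m] M) (hM0 : ∀ ω, 0 ≤ M ω) (hMi : Integrable M μ)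
    {X : Ω → ℕ} (hX : Measurable X)
    (hg : ∀ z ∈ Set.Icc (0 : ℝ) 1,
      μ[fun ω => z ^ X ω | m] =ᵐ[μ] fun ω => Real.exp (M ω * (z - 1))) :
    MemLp (fun ω => (X ω : ℝ) - M ω) 2 μ := by
  have hM' : Measurable M := hM.mono hm le_rfl
  have hXr : Measurable fun ω => (X ω : ℝ) := (measurable_of_countable _).comp hX
  refine (memLp_two_iff_integrable_sq (hXr.sub hM').aestronglyMeasurable).2 ?_
  have key : ∀ n, ∫ ω, U (T n) (M ω) (X ω) * U (T n) (M ω) (X ω) ∂μ ≤ ∫ ω, M ω ∂μ := fun n => by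
    have ht := T_pos n
    have ht1 := T_le_one n
    have hgX : μ[fun ω => (1 - T n) ^ X ω | m] =ᵐ[μ] fun ω => Real.exp (-(M ω * T n)) := by
      refine (hg (1 - T n) ⟨by linarith, by linarith⟩).trans (ae_of_all _ fun ω => ?_)
      ring_nf
    have hgXX : μ[fun ω => (1 - T n) ^ X ω * (1 - T n) ^ X ω | m] =ᵐ[μ]
        fun ω => Real.exp (M ω * ((1 : ℝ) * T n ^ 2 - 2 * T n)) := by
      have h := hg ((1 - T n) * (1 - T n)) ⟨by nlinarith, by nlinarith⟩
      simp_rw [mul_pow] at h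
      refine h.trans (ae_of_all _ fun ω => ?_)
      ring_nf
    have h := setIntegral_U_mul_U (c := fun _ => 1) hm hM hM0 measurable_const
      (fun _ => le_rfl) hX hX ht ht1 hgX hgX hgXX MeasurableSet.univ
    rw [setIntegral_univ, setIntegral_univ] at h
    rw [h]
    refine integral_mono_of_nonneg (ae_of_all _ fun ω => R_nonneg (hM0 ω) zero_le_one) hMi
      (ae_of_all _ fun ω => ?_)
    simpa using R_le ht ht1 (hM0 ω) zero_le_one le_rfl
  have hlim : ∀ ω, Tendsto (fun n => U (T n) (M ω) (X ω) * U (T n) (M ω) (X ω)) atTop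
      (𝓝 (((X ω : ℝ) - M ω) ^ 2)) := fun ω => by
    have h := (tendsto_U (M ω) (X ω)).comp tendsto_T
    rw [sq]; exact h.mul h
  refine ⟨((hXr.sub hM').pow_const 2).aestronglyMeasurable, ?_⟩
  have fatou : ∫⁻ ω, ‖((X ω : ℝ) - M ω) ^ 2‖ₑ ∂μ
      ≤ liminf (fun n => ∫⁻ ω, ‖U (T n) (M ω) (X ω) * U (T n) (M ω) (X ω)‖ₑ ∂μ) atTop := by
    refine le_trans (le_of_eq (lintegral_congr fun ω => ?_)) (lintegral_liminf_le fun n =>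
      ((measurable_U hM' hX _).mul (measurable_U hM' hX _)).enorm)
    exact (hlim ω).enorm.liminf_eq.symm
  refine lt_of_le_of_lt fatou ?_
  refine lt_of_le_of_lt (liminf_le_of_frequently_le' (Frequently.of_forall fun n => ?_))
    (ENNReal.ofReal_lt_top (r := ∫ ω, M ω ∂μ))
  rw [lintegral_enorm_of_nonneg fun ω => mul_self_nonneg _,
    ← ofReal_integral_eq_lintegral_ofReal
      (integrable_U_mul_U hM' hM0 hX (T_pos n) (T_le_one n))
      (ae_of_all _ fun ω => mul_self_nonneg _)]
  exact ENNReal.ofReal_le_ofReal (key n)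

/-- The covariance identity, given square integrability of the centred counts. -/
lemma integral_mul_sub [IsProbabilityMeasure μ] (hm : m ≤ mΩ) {M c : Ω → ℝ}
    (hM : Measurable[m] M) (hM0 : ∀ ω, 0 ≤ M ω) (hMi : Integrable M μ) (hc : Measurable c)
    (hc0 : ∀ ω, 0 ≤ c ω) (hc1 : ∀ ω, c ω ≤ 1) {X Y : Ω → ℕ} (hX : Measurable X)
    (hY : Measurable Y)
    (hLX : MemLp (fun ω => (X ω : ℝ) - M ω) 2 μ) (hLY : MemLp (fun ω => (Y ω : ℝ) - M ω) 2 μ)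
    (hgX : ∀ t ∈ Set.Ioc (0 : ℝ) 1,
      μ[fun ω => (1 - t) ^ X ω | m] =ᵐ[μ] fun ω => Real.exp (-(M ω * t)))
    (hgY : ∀ t ∈ Set.Ioc (0 : ℝ) 1,
      μ[fun ω => (1 - t) ^ Y ω | m] =ᵐ[μ] fun ω => Real.exp (-(M ω * t)))
    (hgXY : ∀ t ∈ Set.Ioc (0 : ℝ) 1, μ[fun ω => (1 - t) ^ X ω * (1 - t) ^ Y ω | m] =ᵐ[μ]
      fun ω => Real.exp (M ω * (c ω * t ^ 2 - 2 * t))) :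
    ∫ ω, ((X ω : ℝ) - M ω) * ((Y ω : ℝ) - M ω) ∂μ = ∫ ω, M ω * c ω ∂μ := by
  have hM' : Measurable M := hM.mono hm le_rfl
  have hMc : Integrable (fun ω => M ω * c ω) μ := by
    refine hMi.mono (hM'.mul hc).aestronglyMeasurable (ae_of_all _ fun ω => ?_)
    rw [Real.norm_of_nonneg (mul_nonneg (hM0 ω) (hc0 ω)), Real.norm_of_nonneg (hM0 ω)]
    exact mul_le_of_le_one_right (hM0 ω) (hc1 ω)
  let A : ℕ → Set Ω := fun n => {ω | M ω ≤ n}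
  have hA : ∀ n, MeasurableSet[m] (A n) := fun n => hM measurableSet_Iic
  have hmono : Monotone A := fun i j hij ω (hω : M ω ≤ i) =>
    hω.trans (by exact_mod_cast hij)
  have hU : ⋃ n, A n = Set.univ := Set.eq_univ_of_forall fun ω =>
    Set.mem_iUnion.2 (exists_nat_ge (M ω))
  have hXY : Integrable (fun ω => ((X ω : ℝ) - M ω) * ((Y ω : ℝ) - M ω)) μ :=
    hLX.integrable_mul hLY
  have step : ∀ n, ∫ ω in A n, ((X ω : ℝ) - M ω) * ((Y ω : ℝ) - M ω) ∂μ
      = ∫ ω in A n, M ω * c ω ∂μ := fun n => by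
    have hML : MemLp (fun ω => 2 * M ω) 2 (μ.restrict (A n)) := by
      refine MemLp.of_bound (hM'.const_mul 2).aestronglyMeasurable (2 * n) ?_
      filter_upwards [ae_restrict_mem (hm _ (hA n))] with ω hω
      rw [Real.norm_of_nonneg (mul_nonneg zero_le_two (hM0 ω))]
      exact mul_le_mul_of_nonneg_left hω zero_le_two
    have hdom := ((hLX.restrict (A n)).add hML).integrable_mul ((hLY.restrict (A n)).add hML)
    have l1 : Tendsto (fun j => ∫ ω in A n, U (T j) (M ω) (X ω) * U (T j) (M ω) (Y ω) ∂μ) atTop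
        (𝓝 (∫ ω in A n, ((X ω : ℝ) - M ω) * ((Y ω : ℝ) - M ω) ∂μ)) := by
      refine tendsto_integral_of_dominated_convergence _ (fun j =>
        ((measurable_U hM' hX _).mul (measurable_U hM' hY _)).aestronglyMeasurable) hdom
        (fun j => ae_of_all _ fun ω => ?_) (ae_of_all _ fun ω =>
          ((tendsto_U (M ω) (X ω)).comp tendsto_T).mul ((tendsto_U (M ω) (Y ω)).comp tendsto_T))
      have a := abs_U_le (T_pos j) (T_le_one j) (hM0 ω) (X ω)
      have b := abs_U_le (T_pos j) (T_le_one j) (hM0 ω) (Y ω)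
      have hx : (0 : ℝ) ≤ X ω + M ω := add_nonneg (Nat.cast_nonneg _) (hM0 ω)
      rw [Real.norm_eq_abs, abs_mul]
      refine (mul_le_mul a b (abs_nonneg _) hx).trans (le_of_eq ?_)
      simp only [Pi.mul_apply, Pi.add_apply]
      ring
    have l2 : Tendsto (fun j => ∫ ω in A n, R (T j) (M ω) (c ω) ∂μ) atTop
        (𝓝 (∫ ω in A n, M ω * c ω ∂μ)) := by
      refine tendsto_integral_of_dominated_convergence (fun ω => M ω * c ω) (fun j =>
        (measurable_R hM' hc _).aestronglyMeasurable) hMc.integrableOn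
        (fun j => ae_of_all _ fun ω => ?_)
        (ae_of_all _ fun ω => (tendsto_R (M ω) (c ω)).comp tendsto_T)
      rw [Real.norm_of_nonneg (R_nonneg (hM0 ω) (hc0 ω))]
      exact R_le (T_pos j) (T_le_one j) (hM0 ω) (hc0 ω) (hc1 ω)
    refine tendsto_nhds_unique l1 (l2.congr fun j => ?_)
    have hj : T j ∈ Set.Ioc (0 : ℝ) 1 := ⟨T_pos j, T_le_one j⟩
    exact (setIntegral_U_mul_U hm hM hM0 hc hc1 hX hY hj.1 hj.2 (hgX _ hj) (hgY _ hj)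
      (hgXY _ hj) (hA n)).symm
  have l1 := tendsto_setIntegral_of_monotone (fun n => hm _ (hA n)) hmono
    (hXY.integrableOn (s := ⋃ n, A n))
  have l2 := tendsto_setIntegral_of_monotone (fun n => hm _ (hA n)) hmono
    (hMc.integrableOn (s := ⋃ n, A n))
  rw [hU, setIntegral_univ] at l1 l2
  exact tendsto_nhds_unique l1 (l2.congr fun n => (step n).symm)

end INARCov



open MeasureTheory in
theorem stmt_8 {Ω : Type*} [MeasurableSpace Ω] (μ : Measure Ω) [IsProbabilityMeasure μ]
    (lam : ℝ) (hlam : 0 < lam) (k : ℕ)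
    (α : Ω → ℝ) (hαmeas : Measurable α) (hα : ∀ ω, α ω ∈ Set.Ioo (0 : ℝ) 1)
    (hint : Integrable (fun ω => (1 - α ω)⁻¹) μ)
    (X₀ Xk : Ω → ℕ) (hX₀ : Measurable X₀) (hXk : Measurable Xk)
    (hgen : ∀ z₀ ∈ Set.Icc (-1 : ℝ) 1, ∀ zk ∈ Set.Icc (-1 : ℝ) 1,
      μ[(fun ω => z₀ ^ X₀ ω * zk ^ Xk ω) | MeasurableSpace.comap α inferInstance]
        =ᵐ[μ] fun ω =>
          Real.exp ((lam / (1 - α ω)) *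
            ((α ω) ^ k * (z₀ - 1) * (zk - 1) + (z₀ - 1) + (zk - 1)))) :
    Integrable
        (fun ω => ((X₀ ω : ℝ) - lam / (1 - α ω)) * ((Xk ω : ℝ) - lam / (1 - α ω))) μ ∧
      ∫ ω, ((X₀ ω : ℝ) - lam / (1 - α ω)) * ((Xk ω : ℝ) - lam / (1 - α ω)) ∂μ =
        lam * ∫ ω, (α ω) ^ k / (1 - α ω) ∂μ := by
  have hm : MeasurableSpace.comap α inferInstance ≤ (inferInstance : MeasurableSpace Ω) :=
    hαmeas.comap_le
  have hαm : Measurable[MeasurableSpace.comap α inferInstance] α := comap_measurable α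
  have hM : Measurable[MeasurableSpace.comap α inferInstance] fun ω => lam / (1 - α ω) :=
    Measurable.const_div (Measurable.const_sub hαm 1) lam
  have hM0 : ∀ ω, 0 ≤ lam / (1 - α ω) := fun ω =>
    div_nonneg hlam.le (sub_nonneg.2 (hα ω).2.le)
  have hMi : Integrable (fun ω => lam / (1 - α ω)) μ := by
    simpa only [div_eq_mul_inv] using hint.const_mul lam
  have one_mem : (1 : ℝ) ∈ Set.Icc (-1 : ℝ) 1 := by norm_num
  -- The marginal generating functions are the joint one with the other argument equal to `1`.
  have hg₀ : ∀ z ∈ Set.Icc (0 : ℝ) 1,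
      μ[fun ω => z ^ X₀ ω | MeasurableSpace.comap α inferInstance]
        =ᵐ[μ] fun ω => Real.exp (lam / (1 - α ω) * (z - 1)) := fun z hz => by
    simpa using hgen z ⟨by linarith [hz.1], hz.2⟩ 1 one_mem
  have hgk : ∀ z ∈ Set.Icc (0 : ℝ) 1,
      μ[fun ω => z ^ Xk ω | MeasurableSpace.comap α inferInstance]
        =ᵐ[μ] fun ω => Real.exp (lam / (1 - α ω) * (z - 1)) := fun z hz => by
    simpa using hgen 1 one_mem z ⟨by linarith [hz.1], hz.2⟩
  have hL₀ := INARCov.memLp_sub hm hM hM0 hMi hX₀ hg₀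
  have hLk := INARCov.memLp_sub hm hM hM0 hMi hXk hgk
  refine ⟨hL₀.integrable_mul hLk, ?_⟩
  have h := INARCov.integral_mul_sub (c := fun ω => α ω ^ k) hm hM hM0 hMi
    (hαmeas.pow_const k) (fun ω => pow_nonneg (hα ω).1.le k)
    (fun ω => pow_le_one₀ (hα ω).1.le (hα ω).2.le) hX₀ hXk hL₀ hLk
    (fun t ht => (hg₀ (1 - t) ⟨by linarith [ht.2], by linarith [ht.1]⟩).trans
      (Filter.EventuallyEq.of_eq (by ext ω; ring_nf)))
    (fun t ht => (hgk (1 - t) ⟨by linarith [ht.2], by linarith [ht.1]⟩).trans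
      (Filter.EventuallyEq.of_eq (by ext ω; ring_nf)))
    (fun t ht => (hgen (1 - t) ⟨by linarith [ht.2], by linarith [ht.1]⟩
      (1 - t) ⟨by linarith [ht.2], by linarith [ht.1]⟩).trans
      (Filter.EventuallyEq.of_eq (by ext ω; ring_nf)))
  rw [h, ← integral_const_mul]
  refine integral_congr_ae (ae_of_all _ fun ω => ?_)
  ring
end

section
/- Let β > 0 and let ψ : (0,1) → [0,∞) be measurable with ∫₀¹ ψ(a)(1−a)^β da = 1 and ψ(a) → ψ₁ ∈ (0,∞) as a → 1⁻. Then lim_{k→∞} k^β ∫₀¹ a^k (1−a)^{β−1} ψ(a) da = ψ₁ Γ(β), where Γ denotes the Gamma function. -/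
/-!
The normalized kernels `φ_k(a) = k^β a^k (1-a)^(β-1) / Γ(β)` on `(0,1)` form an approximate
identity at the endpoint `1`: their total mass tends to `1` by Euler's limit formula for the Gamma
function (`tendsto_betaKernel_mass`), and they tend to `0` uniformly away from `1`, because there
`a^k` decays geometrically (`betaKernel_tendstoUniformlyOn`). The function `ψ` is integrable on
`(0,1)`: near `1` it is bounded since it has a limit, and away from `1` the weight `(1-a)^β` is
bounded below (`integrableOn_of_density`). The general theorem on integrals against peak functions
then gives `∫ φ_k ψ → ψ₁`.
-/

open Filter Topology MeasureTheory Set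

lemma betaKernel_mass_eq_GammaSeq (β : ℝ) (hβ : 0 < β) (k : ℕ) :
    (((k : ℝ) ^ β * ∫ a in Ioo (0 : ℝ) 1, a ^ k * (1 - a) ^ (β - 1) : ℝ) : ℂ)
      = Complex.GammaSeq β k := by
  rw [Complex.GammaSeq_eq_betaIntegral_of_re_pos (by simpa using hβ),
    ← Complex.betaIntegral_symm, Complex.betaIntegral,
    intervalIntegral.integral_of_le zero_le_one, integral_Ioc_eq_integral_Ioo,
    Complex.ofReal_mul, Complex.ofReal_cpow (Nat.cast_nonneg k), ← integral_complex_ofReal]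
  congr 1
  refine setIntegral_congr_fun measurableSet_Ioo fun a ha => ?_
  have h1 : (0 : ℝ) ≤ 1 - a := by linarith [ha.2]
  simp only [add_sub_cancel_right, Complex.cpow_natCast]
  rw [Complex.ofReal_mul, Complex.ofReal_cpow h1]
  push_cast
  rfl

lemma tendsto_betaKernel_mass (β : ℝ) (hβ : 0 < β) :
    Tendsto (fun k : ℕ => (k : ℝ) ^ β * ∫ a in Ioo (0 : ℝ) 1, a ^ k * (1 - a) ^ (β - 1))
      atTop (𝓝 (Real.Gamma β)) := by
  have h := (Complex.continuous_re.tendsto _).comp (Complex.GammaSeq_tendsto_Gamma (β : ℂ))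
  rw [Complex.Gamma_ofReal, Complex.ofReal_re] at h
  refine h.congr fun k => ?_
  rw [Function.comp_apply, ← betaKernel_mass_eq_GammaSeq β hβ k, Complex.ofReal_re]

lemma tendsto_natCast_rpow_mul_pow (β r : ℝ) (hr0 : 0 < r) (hr1 : r < 1) :
    Tendsto (fun k : ℕ => (k : ℝ) ^ β * r ^ k) atTop (𝓝 0) := by
  have h := (tendsto_rpow_mul_exp_neg_mul_atTop_nhds_zero β (-Real.log r)
    (by linarith [Real.log_neg hr0 hr1])).comp tendsto_natCast_atTop_atTop
  refine h.congr fun k => ?_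
  simp only [Function.comp_apply, neg_neg]
  rw [mul_comm (Real.log r), Real.exp_nat_mul, Real.exp_log hr0]

/-- Points of `(0,1)` outside a left neighbourhood of `1` stay at a fixed distance `ε` from `1`;
requiring `ε < 1` keeps the ratio `1 - ε` positive. -/
lemma exists_le_one_sub {u : Set ℝ} (hu : u ∈ 𝓝[Ioo (0 : ℝ) 1] 1) :
    ∃ ε : ℝ, 0 < ε ∧ ε < 1 ∧ ∀ a ∈ Ioo (0 : ℝ) 1, a ∉ u → a ≤ 1 - ε := by
  obtain ⟨ε, hε, h⟩ := Metric.mem_nhdsWithin_iff.1 hu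
  refine ⟨min ε (1 / 2), by positivity, (min_le_right _ _).trans_lt (by norm_num),
    fun a ha hau => ?_⟩
  by_contra! hlt
  refine hau (h ⟨?_, ha⟩)
  rw [Metric.mem_ball, Real.dist_eq, abs_lt]
  constructor <;> linarith [ha.2, min_le_left ε (1 / 2)]

lemma betaKernel_tendstoUniformlyOn (β C : ℝ) (hβ : 0 < β) (hC : 0 < C) (u : Set ℝ)
    (hu : IsOpen u) (h1u : (1 : ℝ) ∈ u) :
    TendstoUniformlyOn (fun (k : ℕ) (a : ℝ) => (k : ℝ) ^ β * (a ^ k * (1 - a) ^ (β - 1)) / C) 0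
      atTop (Ioo (0 : ℝ) 1 \ u) := by
  obtain ⟨ε, hε0, hε1, hε⟩ := exists_le_one_sub (mem_nhdsWithin_of_mem_nhds (hu.mem_nhds h1u))
  have hlim : Tendsto (fun k : ℕ => (k : ℝ) ^ β * (1 - ε) ^ k * (1 / ε) / C) atTop (𝓝 0) := by
    simpa using ((tendsto_natCast_rpow_mul_pow β (1 - ε) (by linarith) (by linarith)).mul_const
      (1 / ε)).div_const C
  rw [Metric.tendstoUniformlyOn_iff]
  intro δ hδ
  filter_upwards [hlim.eventually_lt_const hδ] with k hk a ha
  have hle := hε a ha.1 ha.2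
  have ha0 : 0 < a := ha.1.1
  have h1a : 0 < 1 - a := by linarith
  -- `(1 - a)^(β - 1) = (1 - a)^β / (1 - a)`, which avoids a case split on the sign of `β - 1`.
  have hw : (1 - a) ^ (β - 1) ≤ 1 / ε := by
    rw [Real.rpow_sub_one h1a.ne']
    exact div_le_div₀ zero_le_one (Real.rpow_le_one h1a.le (by linarith) hβ.le) hε0
      (by linarith)
  have hnn : 0 ≤ (k : ℝ) ^ β * (a ^ k * (1 - a) ^ (β - 1)) / C := by positivity
  rw [Pi.zero_apply, dist_zero_left, Real.norm_of_nonneg hnn]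
  refine lt_of_le_of_lt ?_ hk
  rw [mul_assoc]
  gcongr

lemma integrableOn_of_density (β : ℝ) (hβ : 0 < β) (ψ : ℝ → ℝ) (ψ₁ : ℝ)
    (hmeas : Measurable ψ) (hint : IntegrableOn (fun a => ψ a * (1 - a) ^ β) (Ioo (0 : ℝ) 1))
    (hlim : Tendsto ψ (𝓝[Ioo (0 : ℝ) 1] 1) (𝓝 ψ₁)) :
    IntegrableOn ψ (Ioo (0 : ℝ) 1) := by
  obtain ⟨ε, hε0, -, hε⟩ := exists_le_one_sub
    (hlim.norm.eventually_lt_const (lt_add_one ‖ψ₁‖))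
  have hconst : IntegrableOn (fun _ : ℝ => ‖ψ₁‖ + 1) (Ioo (0 : ℝ) 1) :=
    integrableOn_const (by simp)
  have hdom := hconst.add (hint.norm.mul_const (1 / ε ^ β))
  refine Integrable.mono' hdom hmeas.aestronglyMeasurable
    (ae_restrict_of_forall_mem measurableSet_Ioo fun a ha => ?_)
  have h1a : 0 < 1 - a := by linarith [ha.2]
  simp only [Pi.add_apply, norm_mul, Real.norm_of_nonneg (Real.rpow_nonneg h1a.le β)]
  by_cases hb : ‖ψ a‖ < ‖ψ₁‖ + 1
  · have : 0 ≤ ‖ψ a‖ * (1 - a) ^ β * (1 / ε ^ β) := by positivity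
    linarith
  · have hle := hε a ha hb
    have hpow : ε ^ β ≤ (1 - a) ^ β := Real.rpow_le_rpow hε0.le (by linarith) hβ.le
    have hεβ : 0 < ε ^ β := by positivity
    have : ‖ψ a‖ ≤ ‖ψ a‖ * (1 - a) ^ β * (1 / ε ^ β) := by
      rw [mul_one_div, le_div_iff₀ hεβ]
      gcongr
    linarith [norm_nonneg ψ₁]

theorem stmt_10 (β : ℝ) (hβ : 0 < β) (ψ : ℝ → ℝ) (ψ₁ : ℝ) (hψ₁ : 0 < ψ₁)
    (hmeas : Measurable ψ) (hnonneg : ∀ a ∈ Set.Ioo (0 : ℝ) 1, 0 ≤ ψ a)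
    (hdens : ∫ a in Set.Ioo (0 : ℝ) 1, ψ a * (1 - a) ^ β = 1)
    (hlim : Filter.Tendsto ψ (nhdsWithin 1 (Set.Ioo (0 : ℝ) 1)) (nhds ψ₁)) :
    Filter.Tendsto
      (fun k : ℕ => (k : ℝ) ^ β * ∫ a in Set.Ioo (0 : ℝ) 1, a ^ k * (1 - a) ^ (β - 1) * ψ a)
      Filter.atTop (nhds (ψ₁ * Real.Gamma β)) := by
  have hΓ : 0 < Real.Gamma β := Real.Gamma_pos_of_pos hβ
  -- A non-integrable function would have Bochner integral `0`, not `1`.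
  have hint : IntegrableOn (fun a => ψ a * (1 - a) ^ β) (Ioo (0 : ℝ) 1) := by
    by_contra h
    rw [integral_undef h] at hdens
    exact zero_ne_one hdens
  have key := tendsto_setIntegral_peak_smul_of_integrableOn_of_tendsto
    (μ := volume) (l := atTop) (x₀ := (1 : ℝ)) (s := Ioo (0 : ℝ) 1) (t := Ioo (0 : ℝ) 1)
    (φ := fun (k : ℕ) (a : ℝ) => (k : ℝ) ^ β * (a ^ k * (1 - a) ^ (β - 1)) / Real.Gamma β)
    (g := ψ) (a := ψ₁)
    measurableSet_Ioo measurableSet_Ioo Subset.rfl self_mem_nhdsWithin (by simp)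
    (Eventually.of_forall fun k a ha => by
      have h0 : 0 < a := ha.1
      have h1 : 0 < 1 - a := by linarith [ha.2]
      positivity)
    (betaKernel_tendstoUniformlyOn β _ hβ hΓ)
    (by
      simp only [integral_div, integral_const_mul]
      simpa [hΓ.ne'] using (tendsto_betaKernel_mass β hβ).div_const (Real.Gamma β))
    (Eventually.of_forall fun k => Measurable.aestronglyMeasurable (by fun_prop))
    (integrableOn_of_density β hβ ψ ψ₁ hmeas hint hlim) hlim
  refine (key.mul_const (Real.Gamma β)).congr fun k => ?_
  rw [← integral_mul_const, ← integral_const_mul]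
  refine integral_congr_ae (Eventually.of_forall fun a => ?_)
  simp only [smul_eq_mul]
  field_simp
end

section
/- Let λ > 0, β ∈ (−1,0), let ψ : (0,1) → [0,∞) be measurable with ∫₀¹ ψ(a)(1−a)^β da = 1 and ψ(a) → ψ₁ ∈ (0,∞) as a → 1⁻, let m be a positive integer and θ₁, …, θ_m ∈ ℝ. For N ≥ 1 set γ_N := N^{−1/(2(1+β))} and, for a ∈ (0,1), A_N(a) := Σ_{k=1}^{m} ( e^{i γ_N θ_k} − 1 − i γ_N θ_k ) + Σ_{1≤ℓ<j≤m} a^{j−ℓ} ( e^{i γ_N θ_ℓ} − 1 ) e^{i γ_N (θ_{ℓ+1}+⋯+θ_{j−1})} ( e^{i γ_N θ_j} − 1 ). Then lim_{N→∞} N ∫₀¹ ( 1 − e^{(λ/(1−a)) A_N(a)} ) ψ(a)(1−a)^β da = K_β · | θ₁ + ⋯ + θ_m |^{2(1+β)}, where K_β := ψ₁ (λ/2)^{1+β} Γ(−β)/(1+β). -/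
/-!
Write `s = γ_N ^ 2`, so that `N * s ^ (1 + β) = 1`, and `S = θ₁ + ⋯ + θ_m`.

At `a = 1` the double sum telescopes and `A_N(1) = exp (i γ_N S) - 1 - i γ_N S` (`expo_one`), which
has nonpositive real part and satisfies `A_N(1) / s → -S ^ 2 / 2` (`tendsto_exp_taylor`). Moreover
`|A_N(a) - A_N(1)| ≤ D s (1 - a)` for a constant `D` (`norm_expo_sub_le`). Hence the exponents
`(λ / (1 - a)) A_N(a)` have uniformly bounded real part, and
`|1 - exp ((λ / (1 - a)) A_N(a))| ≤ K min (1, s / (1 - a))`.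

Fix `δ` such that `ψ` is bounded on `(1 - δ, 1)`. Away from `1` the contribution is
`O(N s) = O(s ^ (-β)) → 0`. Near `1`, the substitution `a = 1 - s u` absorbs the factor `N`, and
dominated convergence with the majorant `const * u ^ β * min (1, 1 / u)` gives the limit
`ψ₁ ∫₀^∞ (1 - exp (-λ S ^ 2 / (2 u))) u ^ β du` (`tendsto_scaled_integral`). Integration by parts
and the substitution `w = 1 / u` evaluate this integral through the Gamma function
(`integral_one_sub_exp_neg_div`).
-/

open MeasureTheory Filter Topology

/-! ### Elementary estimates -/

lemma norm_one_sub_exp_le {z : ℂ} {c : ℝ} (hc : 0 ≤ c) (hz : z.re ≤ c) :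
    ‖1 - Complex.exp z‖ ≤ Real.exp c * ‖z‖ := by
  have h := (convex_halfSpace_re_le c).norm_image_sub_le_of_norm_deriv_le
    (f := Complex.exp) (C := Real.exp c) (x := z) (y := 0)
    (fun x _ => Complex.differentiableAt_exp)
    (fun x hx => by
      rw [Complex.deriv_exp, Complex.norm_exp]
      exact Real.exp_le_exp.2 hx) hz (by simpa using hc)
  simpa using h

/-- Up to a constant, this function dominates the rescaled integrands. -/
lemma integrableOn_min_rpow {β : ℝ} (hβ : β ∈ Set.Ioo (-1 : ℝ) 0) :
    IntegrableOn (fun u : ℝ => u ^ β * min 1 (1 / u)) (Set.Ioi 0) := by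
  have hm : Measurable (fun u : ℝ => u ^ β * min 1 (1 / u)) := by fun_prop
  rw [← Set.Ioc_union_Ioi_eq_Ioi (zero_le_one' ℝ)]
  refine IntegrableOn.union ?_ ?_
  · have h1 : IntegrableOn (fun x : ℝ => x ^ β) (Set.Ioc 0 1) :=
      (intervalIntegrable_iff_integrableOn_Ioc_of_le zero_le_one).1
        (intervalIntegral.intervalIntegrable_rpow' hβ.1)
    refine Integrable.mono' h1 hm.aestronglyMeasurable ?_
    refine (ae_restrict_iff' measurableSet_Ioc).2 (Eventually.of_forall fun u hu => ?_)
    have hu0 : 0 < u := hu.1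
    rw [Real.norm_of_nonneg (by positivity)]
    exact mul_le_of_le_one_right (by positivity) (min_le_left _ _)
  · have h1 : IntegrableOn (fun x : ℝ => x ^ (β - 1)) (Set.Ioi 1) :=
      integrableOn_Ioi_rpow_of_lt (by linarith [hβ.2]) one_pos
    refine Integrable.mono' h1 hm.aestronglyMeasurable ?_
    refine (ae_restrict_iff' measurableSet_Ioi).2 (Eventually.of_forall fun u hu => ?_)
    have hu0 : 0 < u := lt_trans one_pos hu
    rw [Real.norm_of_nonneg (by positivity), Real.rpow_sub_one hu0.ne',
      div_eq_mul_one_div (u ^ β)]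
    exact mul_le_mul_of_nonneg_left (min_le_right _ _) (by positivity)

lemma one_sub_exp_neg_div_le {c u : ℝ} (hc : 0 ≤ c) (hu : 0 < u) :
    0 ≤ 1 - Real.exp (-(c / u)) ∧ 1 - Real.exp (-(c / u)) ≤ min 1 (c / u) := by
  refine ⟨?_, le_min ?_ ?_⟩
  · have : Real.exp (-(c / u)) ≤ 1 := Real.exp_le_one_iff.2 (by simp; positivity)
    linarith
  · linarith [Real.exp_pos (-(c / u))]
  · linarith [Real.add_one_le_exp (-(c / u))]

/-! ### The limiting integral -/

/-- The substitution `w = 1/u` turns this integral into the Gamma integral. -/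
lemma integral_rpow_mul_exp_neg_div {β c : ℝ} (hβ : β ∈ Set.Ioo (-1 : ℝ) 0) (hc : 0 < c) :
    IntegrableOn (fun u : ℝ => u ^ (β - 1) * Real.exp (-(c / u))) (Set.Ioi 0) ∧
    ∫ u in Set.Ioi (0 : ℝ), u ^ (β - 1) * Real.exp (-(c / u)) = (1 / c) ^ (-β) * Real.Gamma (-β) := by
  have hb : 0 < -β := by linarith [hβ.2]
  have hG := Real.integral_rpow_mul_exp_neg_mul_Ioi hb hc
  have hne : (-1 : ℝ) ≠ 0 := by norm_num
  have key : ∀ u ∈ Set.Ioi (0 : ℝ), (|(-1 : ℝ)| * u ^ ((-1 : ℝ) - 1)) •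
      ((u ^ (-1 : ℝ)) ^ (-β - 1) * Real.exp (-(c * u ^ (-1 : ℝ))))
      = u ^ (β - 1) * Real.exp (-(c / u)) := by
    intro u hu
    have hu : 0 < u := hu
    rw [← Real.rpow_mul hu.le, smul_eq_mul, abs_neg, abs_one, one_mul, ← mul_assoc,
      ← Real.rpow_add hu, Real.rpow_neg_one, ← div_eq_mul_inv]
    congr 2
    ring
  have hint : IntegrableOn (fun t : ℝ => t ^ (-β - 1) * Real.exp (-(c * t))) (Set.Ioi 0) := by
    apply Integrable.of_integral_ne_zero
    rw [hG]
    have := Real.Gamma_pos_of_pos hb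
    positivity
  constructor
  · exact ((integrableOn_Ioi_comp_rpow_iff _ hne).2 hint).congr_fun key measurableSet_Ioi
  · rw [← hG, ← integral_comp_rpow_Ioi (fun t : ℝ => t ^ (-β - 1) * Real.exp (-(c * t))) hne]
    exact (setIntegral_congr_fun measurableSet_Ioi key).symm

lemma integrableOn_one_sub_exp_neg_div {β c : ℝ} (hβ : β ∈ Set.Ioo (-1 : ℝ) 0) (hc : 0 ≤ c) :
    IntegrableOn (fun u : ℝ => (1 - Real.exp (-(c / u))) * u ^ β) (Set.Ioi 0) := by
  refine Integrable.mono' ((integrableOn_min_rpow hβ).const_mul (max 1 c))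
    (by fun_prop : Measurable _).aestronglyMeasurable ?_
  refine (ae_restrict_iff' measurableSet_Ioi).2 (Eventually.of_forall fun u hu => ?_)
  have hu : 0 < u := hu
  obtain ⟨h0, h1⟩ := one_sub_exp_neg_div_le hc hu
  rw [Real.norm_of_nonneg (by positivity), mul_comm (_ - _), mul_left_comm]
  gcongr
  refine h1.trans ?_
  rw [mul_min_of_nonneg _ _ (by positivity)]
  refine min_le_min (by simp) ?_
  rw [div_eq_mul_one_div]
  gcongr
  exact le_max_right _ _

/-- Integration by parts reduces this integral to `integral_rpow_mul_exp_neg_div`. -/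
lemma integral_one_sub_exp_neg_div {β c : ℝ} (hβ : β ∈ Set.Ioo (-1 : ℝ) 0) (hc : 0 ≤ c) :
    ∫ u in Set.Ioi (0 : ℝ), (1 - Real.exp (-(c / u))) * u ^ β
      = c ^ (1 + β) * Real.Gamma (-β) / (1 + β) := by
  have hp : 0 < 1 + β := by linarith [hβ.1]
  rcases hc.eq_or_lt with rfl | hc
  · simp [Real.zero_rpow hp.ne']
  obtain ⟨hI, hE⟩ := integral_rpow_mul_exp_neg_div hβ hc
  have hE' : ∀ u ∈ Set.Ioi (0 : ℝ), (-(Real.exp (-(c / u)) * (c / u ^ 2))) * (u ^ (1 + β) / (1 + β))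
      = -(c / (1 + β)) * (u ^ (β - 1) * Real.exp (-(c / u))) := by
    intro u hu
    have hu : 0 < u := hu
    have : u ^ (1 + β) = u ^ (β - 1) * u ^ 2 := by
      rw [← Real.rpow_natCast, ← Real.rpow_add hu]; congr 1; push_cast; ring
    rw [this]
    field_simp
  have hbd : ∀ u : ℝ, 0 < u → 0 ≤ (1 - Real.exp (-(c / u))) * (u ^ (1 + β) / (1 + β)) ∧
      (1 - Real.exp (-(c / u))) * (u ^ (1 + β) / (1 + β)) ≤ u ^ (1 + β) / (1 + β) ∧
      (1 - Real.exp (-(c / u))) * (u ^ (1 + β) / (1 + β)) ≤ c / (1 + β) * u ^ β := by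
    intro u hu
    obtain ⟨h0, h1⟩ := one_sub_exp_neg_div_le hc.le hu
    have hpos : 0 ≤ u ^ (1 + β) / (1 + β) := by positivity
    refine ⟨by positivity, mul_le_of_le_one_left hpos (h1.trans (min_le_left _ _)), ?_⟩
    calc _ ≤ c / u * (u ^ (1 + β) / (1 + β)) := by
            gcongr; exact h1.trans (min_le_right _ _)
      _ = _ := by rw [Real.rpow_one_add' hu.le hp.ne']; field_simp
  have key := integral_Ioi_mul_deriv_eq_deriv_mul (a := (0 : ℝ)) (a' := (0 : ℝ)) (b' := 0)
    (u := fun u : ℝ => 1 - Real.exp (-(c / u))) (v := fun u : ℝ => u ^ (1 + β) / (1 + β))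
    (u' := fun u : ℝ => -(Real.exp (-(c / u)) * (c / u ^ 2))) (v' := fun u : ℝ => u ^ β)
    (fun x hx => by
      have hx : 0 < x := hx
      have h1 : HasDerivAt (fun u : ℝ => -(c / u)) (c / x ^ 2) x := by
        have := ((hasDerivAt_inv hx.ne').const_mul c).neg
        have e : c / x ^ 2 = -(c * -(x ^ 2)⁻¹) := by ring
        rw [e]
        exact this
      simpa using (h1.exp).const_sub 1)
    (fun x hx => by
      have hx : 0 < x := hx
      have h1 := (Real.hasDerivAt_rpow_const (x := x) (p := 1 + β) (Or.inl hx.ne')).div_const (1 + β)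
      convert h1 using 1
      rw [add_sub_cancel_left]
      field_simp)
    (integrableOn_one_sub_exp_neg_div hβ hc.le)
    (IntegrableOn.congr_fun (hI.const_mul (-(c / (1 + β)))) (fun u hu => (hE' u hu).symm) measurableSet_Ioi)
    (by
      have hlim : Tendsto (fun u : ℝ => u ^ (1 + β) / (1 + β)) (𝓝[>] 0) (𝓝 0) := by
        have := ((Real.continuousAt_rpow_const 0 (1 + β) (Or.inr hp.le)).tendsto.div_const
          (1 + β)).mono_left (nhdsWithin_le_nhds (s := Set.Ioi 0))
        simpa [Real.zero_rpow hp.ne'] using this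
      refine squeeze_zero' ?_ ?_ hlim
      · filter_upwards [self_mem_nhdsWithin] with u hu using (hbd u hu).1
      · filter_upwards [self_mem_nhdsWithin] with u hu using (hbd u hu).2.1)
    (by
      have hlim : Tendsto (fun u : ℝ => c / (1 + β) * u ^ β) atTop (𝓝 0) := by
        have := (tendsto_rpow_neg_atTop (y := -β) (by linarith [hβ.2])).const_mul (c / (1 + β))
        simpa using this
      refine squeeze_zero' ?_ ?_ hlim
      · filter_upwards [eventually_gt_atTop 0] with u hu using (hbd u hu).1
      · filter_upwards [eventually_gt_atTop 0] with u hu using (hbd u hu).2.2)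
  rw [key, setIntegral_congr_fun measurableSet_Ioi hE', integral_const_mul, hE]
  rw [one_div, Real.inv_rpow hc.le, Real.rpow_neg hc.le, inv_inv, Real.rpow_one_add' hc.le hp.ne']
  ring

/-! ### The exponent at `a = 1` -/

/-- For `E x = exp (i γ x)` the left side is the part of the exponent at `a = 1` without its linear
terms; summing first over `j` and then over `ℓ`, it telescopes. -/
lemma telescope (E : ℝ → ℂ) (hE0 : E 0 = 1) (hE : ∀ x y, E (x + y) = E x * E y) (θ : ℕ → ℝ) (m : ℕ) :
    (∑ k ∈ Finset.Icc 1 m, (E (θ k) - 1)) +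
      ∑ ℓ ∈ Finset.Icc 1 m, ∑ j ∈ Finset.Icc (ℓ + 1) m,
        (E (θ ℓ) - 1) * E (∑ r ∈ Finset.Ioo ℓ j, θ r) * (E (θ j) - 1)
      = E (∑ k ∈ Finset.Icc 1 m, θ k) - 1 := by
  have inner : ∀ ℓ d : ℕ, ∑ j ∈ Finset.Icc (ℓ + 1) (ℓ + d), E (∑ r ∈ Finset.Ioo ℓ j, θ r) * (E (θ j) - 1)
      = E (∑ r ∈ Finset.Icc (ℓ + 1) (ℓ + d), θ r) - 1 := by
    intro ℓ d
    induction d with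
    | zero => simp [hE0]
    | succ d ih =>
      have h1 : Finset.Ioo ℓ (ℓ + d + 1) = Finset.Icc (ℓ + 1) (ℓ + d) := by
        ext x; simp
      rw [← add_assoc, Finset.sum_Icc_succ_top (by omega), Finset.sum_Icc_succ_top (by omega), ih, hE, h1]
      ring
  have outer : ∀ m : ℕ, ∑ ℓ ∈ Finset.Icc 1 m, (E (θ ℓ) - 1) * E (∑ r ∈ Finset.Icc (ℓ + 1) m, θ r)
      = E (∑ k ∈ Finset.Icc 1 m, θ k) - 1 := by
    intro m
    induction m with
    | zero => simp [hE0]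
    | succ m ih =>
      rw [Finset.sum_Icc_succ_top (by omega), Finset.sum_Icc_succ_top (f := θ) (a := 1) (by omega), hE]
      have : ∑ ℓ ∈ Finset.Icc 1 m, (E (θ ℓ) - 1) * E (∑ r ∈ Finset.Icc (ℓ + 1) (m + 1), θ r)
          = (E (∑ k ∈ Finset.Icc 1 m, θ k) - 1) * E (θ (m + 1)) := by
        rw [← ih, Finset.sum_mul]
        refine Finset.sum_congr rfl fun ℓ hℓ => ?_
        rw [Finset.sum_Icc_succ_top (by simp at hℓ; omega), hE]
        ring
      rw [this]
      simp [hE0]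
      ring
  rw [← Finset.sum_add_distrib, ← outer m]
  refine Finset.sum_congr rfl fun ℓ hℓ => ?_
  obtain ⟨d, rfl⟩ : ∃ d, m = ℓ + d := ⟨m - ℓ, by simp at hℓ; omega⟩
  have := inner ℓ d
  simp only [mul_assoc, ← Finset.mul_sum, this]
  ring

/-! ### Scaling limit for a general exponent -/

/-- The scaling limit, with only the needed information on the exponents `A N`: they are `O(s N)`,
their real parts are at most `O(s N (1 - a))`, and on the scale `1 - a = s N * u` they are
equivalent to `-q * s N`. -/
lemma tendsto_scaled_integral (lam β : ℝ) (hlam : 0 < lam) (hβ : β ∈ Set.Ioo (-1 : ℝ) 0)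
    (ψ : ℝ → ℝ) (ψ₁ : ℝ) (hmeas : Measurable ψ)
    (hnonneg : ∀ a ∈ Set.Ioo (0 : ℝ) 1, 0 ≤ ψ a)
    (hint : IntegrableOn (fun a => ψ a * (1 - a) ^ β) (Set.Ioo 0 1))
    (hlim : Tendsto ψ (𝓝[Set.Ioo (0 : ℝ) 1] 1) (𝓝 ψ₁))
    (s : ℕ → ℝ) (hs : ∀ᶠ N in atTop, 0 < s N) (hs0 : Tendsto s atTop (𝓝 0))
    (hNs : ∀ᶠ N : ℕ in atTop, (N : ℝ) * s N ^ (1 + β) = 1)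
    (A : ℕ → ℝ → ℂ) (hcont : ∀ N, Continuous (A N)) (C q : ℝ) (hC : 0 ≤ C) (hq : 0 ≤ q)
    (hA1 : ∀ᶠ N in atTop, ∀ a ∈ Set.Ioo (0 : ℝ) 1, ‖A N a‖ ≤ C * s N)
    (hA2 : ∀ᶠ N in atTop, ∀ a ∈ Set.Ioo (0 : ℝ) 1, (A N a).re ≤ C * s N * (1 - a))
    (hA3 : ∀ u : ℝ, 0 < u →
      Tendsto (fun N => A N (1 - s N * u) / (s N : ℂ)) atTop (𝓝 (-(q : ℂ)))) :
    Tendsto (fun N : ℕ => (N : ℂ) * ∫ a in Set.Ioo (0 : ℝ) 1,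
        (1 - Complex.exp ((lam / (1 - a) : ℝ) * A N a)) * ((ψ a * (1 - a) ^ β : ℝ) : ℂ))
      atTop (𝓝 ((ψ₁ * ((lam * q) ^ (1 + β) * Real.Gamma (-β) / (1 + β)) : ℝ) : ℂ)) := by
  have hp : 0 < 1 + β := by linarith [hβ.1]
  -- `ψ` is bounded on a left neighbourhood `(1 - δ, 1)` of `1`
  obtain ⟨δ, hδ0, hδ1, hδ⟩ : ∃ δ : ℝ, 0 < δ ∧ δ < 1 ∧
      ∀ a ∈ Set.Ioo (1 - δ) 1, ψ a ≤ ψ₁ + 1 := by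
    have h := hlim.eventually (eventually_le_nhds (show ψ₁ < ψ₁ + 1 by linarith))
    rw [eventually_nhdsWithin_iff, Metric.eventually_nhds_iff] at h
    obtain ⟨ε, hε, h⟩ := h
    refine ⟨min ε (1 / 2), by positivity, by
      linarith [min_le_right ε (1 / 2)], fun a ha => h ?_ ?_⟩
    · rw [Real.dist_eq, abs_sub_comm, abs_of_pos (by linarith [ha.2])]
      linarith [ha.1, min_le_left ε (1 / 2)]
    · exact ⟨by linarith [ha.1, min_le_right ε (1 / 2)], ha.2⟩
  have hψ₁ : 0 ≤ ψ₁ + 1 :=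
    (hnonneg (1 - δ / 2) ⟨by linarith, by linarith⟩).trans (hδ _ ⟨by linarith, by linarith⟩)
  set F : ℕ → ℝ → ℂ := fun N a =>
    (1 - Complex.exp ((lam / (1 - a) : ℝ) * A N a)) * ((ψ a * (1 - a) ^ β : ℝ) : ℂ) with hF
  have hFm : ∀ N, Measurable (F N) := by
    intro N
    have := (hcont N).measurable
    fun_prop
  set c : ℝ := lam * C with hc
  have hc0 : 0 ≤ c := by positivity
  set K : ℝ := max (1 + Real.exp c) (Real.exp c * c) with hK
  have hK0 : 0 ≤ K := le_max_of_le_left (by positivity)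
  -- uniform bounds for the factor `1 - exp`
  have hb1 : ∀ᶠ N in atTop, ∀ a ∈ Set.Ioo (0 : ℝ) 1,
      ‖1 - Complex.exp ((lam / (1 - a) : ℝ) * A N a)‖ ≤ K * min 1 (s N / (1 - a)) := by
    filter_upwards [hs, hs0.eventually (eventually_le_nhds one_pos), hA1, hA2] with N h0 h1 hA1 hA2 a ha
    have ha1 : 0 < 1 - a := by linarith [ha.2]
    have hre : (((lam / (1 - a) : ℝ) : ℂ) * A N a).re ≤ c := by
      rw [Complex.re_ofReal_mul]
      calc lam / (1 - a) * (A N a).re ≤ lam / (1 - a) * (C * s N * (1 - a)) := by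
            gcongr; exact hA2 a ha
        _ = c * s N := by rw [hc]; field_simp
        _ ≤ c := mul_le_of_le_one_right hc0 h1
    rw [mul_min_of_nonneg _ _ hK0, mul_one]
    refine le_min ?_ ?_
    · refine (norm_sub_le _ _).trans ((?_ : _ ≤ 1 + Real.exp c).trans (le_max_left _ _))
      rw [norm_one, Complex.norm_exp]
      gcongr
    · refine (norm_one_sub_exp_le hc0 hre).trans ?_
      calc Real.exp c * ‖((lam / (1 - a) : ℝ) : ℂ) * A N a‖
          ≤ Real.exp c * (lam / (1 - a) * (C * s N)) := by
            rw [norm_mul, Complex.norm_real, Real.norm_of_nonneg (by positivity)]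
            gcongr
            exact hA1 a ha
        _ = (Real.exp c * c) * (s N / (1 - a)) := by rw [hc]; field_simp
        _ ≤ K * (s N / (1 - a)) := by
            gcongr
            exact le_max_right _ _
  have hFint : ∀ᶠ N in atTop, IntegrableOn (F N) (Set.Ioo 0 1) := by
    filter_upwards [hb1] with N hb1
    refine Integrable.mono' (hint.const_mul K) (hFm N).aestronglyMeasurable ?_
    refine (ae_restrict_iff' measurableSet_Ioo).2 (Eventually.of_forall fun a ha => ?_)
    have ha1 : 0 < 1 - a := by linarith [ha.2]
    have hψa := hnonneg a ha
    rw [hF]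
    simp only [norm_mul, Complex.norm_real]
    rw [← norm_mul, Real.norm_of_nonneg (by positivity)]
    gcongr
    exact (hb1 a ha).trans (mul_le_of_le_one_right hK0 (min_le_left _ _))
  have hNs' : ∀ᶠ N : ℕ in atTop, (N : ℝ) * s N = s N ^ (-β) := by
    filter_upwards [hs, hNs] with N h0 h1
    rw [Real.rpow_one_add' h0.le hp.ne'] at h1
    rw [Real.rpow_neg h0.le]
    field_simp
    linarith
  have hNs0 : Tendsto (fun N : ℕ => (N : ℝ) * s N) atTop (𝓝 0) := by
    have : Tendsto (fun N => s N ^ (-β)) atTop (𝓝 0) := by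
      have h := hs0.rpow_const (p := -β) (Or.inr (by linarith [hβ.2]))
      rwa [Real.zero_rpow (by linarith [hβ.2])] at h
    exact this.congr' (by filter_upwards [hNs'] with N h using h.symm)
  -- the part away from `1` is negligible
  have hfar : Tendsto (fun N : ℕ => (N : ℂ) * ∫ a in Set.Ioc (0 : ℝ) (1 - δ), F N a) atTop (𝓝 0) := by
    set I : ℝ := ∫ a in Set.Ioc (0 : ℝ) (1 - δ), ψ a * (1 - a) ^ β with hI
    have hsub : Set.Ioc (0 : ℝ) (1 - δ) ⊆ Set.Ioo 0 1 := fun a ha => ⟨ha.1, by linarith [ha.2]⟩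
    have hz : Tendsto (fun N : ℕ => (N : ℝ) * s N * (K / δ * I)) atTop (𝓝 0) := by
      simpa using hNs0.mul_const (K / δ * I)
    refine squeeze_zero_norm' ?_ hz
    filter_upwards [hb1, hs] with N hb1 h0
    rw [norm_mul, Complex.norm_natCast, mul_assoc]
    gcongr
    have : s N * (K / δ * I) = ∫ a in Set.Ioc (0 : ℝ) (1 - δ), s N * (K / δ) * (ψ a * (1 - a) ^ β) := by
      rw [integral_const_mul]; ring
    rw [this]
    refine norm_integral_le_of_norm_le ((hint.mono_set hsub).const_mul _) ?_
    refine (ae_restrict_iff' measurableSet_Ioc).2 (Eventually.of_forall fun a ha => ?_)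
    have ha1 : δ ≤ 1 - a := by linarith [ha.2]
    have ha2 : 0 < 1 - a := by linarith
    have hψa := hnonneg a (hsub ha)
    rw [hF]
    simp only [norm_mul, Complex.norm_real]
    rw [← norm_mul, Real.norm_of_nonneg (by positivity)]
    gcongr
    refine (hb1 a (hsub ha)).trans ?_
    calc K * min 1 (s N / (1 - a)) ≤ K * (s N / δ) := by
          gcongr
          exact (min_le_right _ _).trans (by gcongr)
      _ = _ := by ring
  -- the part near `1`, after the substitution `a = 1 - s N * u`
  set G : ℕ → ℝ → ℂ := fun N u =>
    ((N : ℝ) * s N : ℝ) * (Set.Ioo (1 - δ) 1).indicator (F N) (1 - s N * u) with hG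
  have hsubst : ∀ᶠ N : ℕ in atTop,
      ∫ u, G N u = (N : ℂ) * ∫ a in Set.Ioo (1 - δ) 1, F N a := by
    filter_upwards [hs] with N h0
    rw [hG]
    simp only
    rw [integral_const_mul, Measure.integral_comp_mul_left
      (fun v => (Set.Ioo (1 - δ) 1).indicator (F N) (1 - v)), integral_sub_left_eq_self,
      integral_indicator measurableSet_Ioo, abs_of_pos (by positivity), Complex.real_smul,
      ← mul_assoc, ← Complex.ofReal_mul, mul_inv_cancel_right₀ h0.ne', Complex.ofReal_natCast]
  have hmem : ∀ N : ℕ, 0 < s N → ∀ u : ℝ, 1 - s N * u ∈ Set.Ioo (1 - δ) 1 → 0 < u := by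
    intro N h0 u hu
    have := hu.2
    by_contra h
    nlinarith
  -- the power weights and the Jacobian combine to `u ^ β`
  have hweight : ∀ N : ℕ, 0 < s N → (N : ℝ) * s N ^ (1 + β) = 1 → ∀ u : ℝ, 0 < u →
      (N : ℝ) * s N * (1 - (1 - s N * u)) ^ β = u ^ β := by
    intro N h0 h1 u hu
    rw [sub_sub_cancel, Real.mul_rpow h0.le hu.le, ← mul_assoc, mul_assoc (N : ℝ),
      ← Real.rpow_one_add' h0.le hp.ne', h1, one_mul]
  have hnear : Tendsto (fun N => ∫ u, G N u) atTop
      (𝓝 (∫ u, (Set.Ioi (0 : ℝ)).indicator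
        (fun u => ((ψ₁ * ((1 - Real.exp (-((lam * q) / u))) * u ^ β) : ℝ) : ℂ)) u)) := by
    refine tendsto_integral_filter_of_dominated_convergence
      ((Set.Ioi (0 : ℝ)).indicator fun u => K * (ψ₁ + 1) * (u ^ β * min 1 (1 / u))) ?_ ?_ ?_ ?_
    · refine Eventually.of_forall fun N => Measurable.aestronglyMeasurable ?_
      have h1 : Measurable ((Set.Ioo (1 - δ) 1).indicator (F N)) := (hFm N).indicator measurableSet_Ioo
      rw [hG]
      exact (h1.comp (by fun_prop : Measurable fun u : ℝ => 1 - s N * u)).const_mul _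
    · filter_upwards [hb1, hs, hNs] with N hb1 h0 h1
      refine Eventually.of_forall fun u => ?_
      by_cases hu : 1 - s N * u ∈ Set.Ioo (1 - δ) 1
      · have hu0 := hmem N h0 u hu
        have hu1 : 1 - s N * u ∈ Set.Ioo (0 : ℝ) 1 := ⟨by linarith [hu.1], hu.2⟩
        rw [Set.indicator_of_mem (show u ∈ Set.Ioi 0 from hu0), hG]
        simp only [Set.indicator_of_mem hu, hF, norm_mul, Complex.norm_real, Complex.ofReal_mul]
        rw [← norm_mul, Real.norm_of_nonneg (by positivity),
          Real.norm_of_nonneg (hnonneg _ hu1),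
          Real.norm_of_nonneg (Real.rpow_nonneg (by linarith [hu.2]) _)]
        have hb := hb1 _ hu1
        have e : s N / (1 - (1 - s N * u)) = 1 / u := by
          rw [sub_sub_cancel]; field_simp
        rw [e] at hb
        calc _ = ‖1 - Complex.exp ((lam / (1 - (1 - s N * u)) : ℝ) * A N (1 - s N * u))‖ *
              ψ (1 - s N * u) * ((N : ℝ) * s N * (1 - (1 - s N * u)) ^ β) := by ring
          _ ≤ K * min 1 (1 / u) * (ψ₁ + 1) * u ^ β := by
            rw [hweight N h0 h1 u hu0]
            gcongr
            · exact hnonneg _ hu1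
            · exact hδ _ hu
          _ = _ := by ring
      · rw [hG]
        simp only [Set.indicator_of_notMem hu, mul_zero, norm_zero]
        refine Set.indicator_nonneg (fun u hu => ?_) u
        have hu : 0 < u := hu
        positivity
    · exact IntegrableOn.integrable_indicator ((integrableOn_min_rpow hβ).const_mul _)
        measurableSet_Ioi
    · refine Eventually.of_forall fun u => ?_
      rcases le_or_gt u 0 with hu | hu
      · rw [Set.indicator_of_notMem (by simpa using hu)]
        refine tendsto_const_nhds.congr' ?_
        filter_upwards [hs] with N h0
        have : 1 - s N * u ∉ Set.Ioo (1 - δ) 1 := fun h => (hmem N h0 u h).not_ge hu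
        simp [hG, Set.indicator_of_notMem this]
      · rw [Set.indicator_of_mem (show u ∈ Set.Ioi 0 from hu)]
        have hsu : Tendsto (fun N => s N * u) atTop (𝓝 0) := by
          simpa using hs0.mul_const u
        have hev : ∀ᶠ N in atTop, 1 - s N * u ∈ Set.Ioo (1 - δ) 1 := by
          filter_upwards [hs, hsu.eventually (eventually_lt_nhds hδ0)] with N h0 h1
          have : 0 < s N * u := by positivity
          exact ⟨by linarith, by linarith⟩
        have hψlim : Tendsto (fun N => ψ (1 - s N * u)) atTop (𝓝 ψ₁) := by
          refine hlim.comp (tendsto_nhdsWithin_iff.2 ⟨?_, ?_⟩)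
          · simpa using hsu.const_sub 1
          · filter_upwards [hev] with N h
            exact ⟨by linarith [h.1], h.2⟩
        have hex : Tendsto (fun N => 1 - Complex.exp (((lam / u : ℝ) : ℂ) *
            (A N (1 - s N * u) / (s N : ℂ)))) atTop
            (𝓝 (1 - Complex.exp (((lam / u : ℝ) : ℂ) * (-(q : ℂ))))) :=
          (((hA3 u hu).const_mul _).cexp).const_sub 1
        have hall := hex.mul
          (((Complex.continuous_ofReal.tendsto _).comp (hψlim.mul_const (u ^ β))))
        have hval : (1 - Complex.exp (((lam / u : ℝ) : ℂ) * (-(q : ℂ)))) * ((ψ₁ * u ^ β : ℝ) : ℂ)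
            = ((ψ₁ * ((1 - Real.exp (-((lam * q) / u))) * u ^ β) : ℝ) : ℂ) := by
          have : ((lam / u : ℝ) : ℂ) * (-(q : ℂ)) = ((-((lam * q) / u) : ℝ) : ℂ) := by
            push_cast; ring
          rw [this]
          push_cast
          ring
        rw [hval] at hall
        refine hall.congr' ?_
        filter_upwards [hev, hs, hNs] with N h h0 h1
        simp only [hG, Set.indicator_of_mem h, hF, Function.comp]
        rw [← hweight N h0 h1 u hu]
        have e : ((lam / u : ℝ) : ℂ) * (A N (1 - s N * u) / (s N : ℂ))
            = ((lam / (1 - (1 - s N * u)) : ℝ) : ℂ) * A N (1 - s N * u) := by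
          have : lam / (1 - (1 - s N * u)) = lam / u / s N := by
            rw [sub_sub_cancel]; field_simp
          rw [this]
          push_cast
          ring
        rw [e]
        push_cast
        ring
  rw [integral_indicator measurableSet_Ioi, integral_complex_ofReal, integral_const_mul,
    integral_one_sub_exp_neg_div hβ (by positivity)] at hnear
  have hsum := hfar.add hnear
  rw [zero_add] at hsum
  refine hsum.congr' ?_
  filter_upwards [hsubst, hFint] with N h1 h2
  rw [h1, ← mul_add, ← setIntegral_union ?_ measurableSet_Ioo (h2.mono_set ?_) (h2.mono_set ?_)]
  · congr 3
    ext a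
    simp only [Set.mem_union, Set.mem_Ioc, Set.mem_Ioo]
    constructor
    · rintro (h | h) <;> constructor <;> linarith [h.1, h.2]
    · intro h
      rcases le_or_gt a (1 - δ) with h' | h'
      · exact Or.inl ⟨h.1, h'⟩
      · exact Or.inr ⟨h', h.2⟩
  · exact Set.disjoint_left.2 fun a ha hb => by linarith [ha.2, hb.1]
  · exact fun a ha => ⟨ha.1, by linarith [ha.2]⟩
  · exact fun a ha => ⟨by linarith [ha.1], ha.2⟩

/-! ### Estimates for the exponent -/

/-- The exponent `A_N(a)` as a function of the scale `g = γ_N`. -/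
noncomputable def expo (m : ℕ) (θ : ℕ → ℝ) (g a : ℝ) : ℂ :=
  (∑ k ∈ Finset.Icc 1 m,
      (Complex.exp (Complex.I * (g * θ k)) - 1 - Complex.I * (g * θ k))) +
    ∑ ℓ ∈ Finset.Icc 1 m, ∑ j ∈ Finset.Icc (ℓ + 1) m,
      (a : ℂ) ^ (j - ℓ) * (Complex.exp (Complex.I * (g * θ ℓ)) - 1) *
        Complex.exp (Complex.I * (g * ∑ r ∈ Finset.Ioo ℓ j, θ r)) *
        (Complex.exp (Complex.I * (g * θ j)) - 1)

lemma expo_one (m : ℕ) (θ : ℕ → ℝ) (g : ℝ) :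
    expo m θ g 1 = Complex.exp (Complex.I * ((g * ∑ k ∈ Finset.Icc 1 m, θ k : ℝ) : ℂ)) - 1
      - Complex.I * ((g * ∑ k ∈ Finset.Icc 1 m, θ k : ℝ) : ℂ) := by
  have h := telescope (fun x => Complex.exp (Complex.I * (g * x))) (by simp)
    (fun x y => by rw [← Complex.exp_add]; congr 1; push_cast; ring) θ m
  simp only at h
  push_cast at h ⊢
  rw [← h, expo]
  rw [Finset.sum_sub_distrib, Finset.mul_sum, Finset.mul_sum]
  simp only [Complex.ofReal_one, Complex.ofReal_sum, one_pow, one_mul]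
  ring

lemma norm_exp_I_mul_sub_one_le (x y : ℝ) :
    ‖Complex.exp (Complex.I * (x * y)) - 1‖ ≤ |x| * |y| := by
  have h := Real.norm_exp_I_mul_ofReal_sub_one_le (x := x * y)
  rw [Real.norm_eq_abs, abs_mul] at h
  push_cast at h
  exact h

/-- Lipschitz constant in `a`, up to the factor `g ^ 2`, of the exponent. -/
noncomputable def lipConst (m : ℕ) (θ : ℕ → ℝ) : ℝ :=
  ∑ ℓ ∈ Finset.Icc 1 m, ∑ j ∈ Finset.Icc (ℓ + 1) m, ((j - ℓ : ℕ) : ℝ) * |θ ℓ| * |θ j|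

lemma lipConst_nonneg (m : ℕ) (θ : ℕ → ℝ) : 0 ≤ lipConst m θ := by
  unfold lipConst
  positivity

lemma norm_expo_sub_le (m : ℕ) (θ : ℕ → ℝ) (g a : ℝ) (ha : a ∈ Set.Ioo (0 : ℝ) 1) :
    ‖expo m θ g a - expo m θ g 1‖ ≤ lipConst m θ * g ^ 2 * (1 - a) := by
  have ha1 : 0 ≤ 1 - a := by linarith [ha.2]
  unfold expo lipConst
  rw [add_sub_add_left_eq_sub, ← Finset.sum_sub_distrib, Finset.sum_mul, Finset.sum_mul]
  refine norm_sum_le_of_le _ fun ℓ _ => ?_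
  rw [← Finset.sum_sub_distrib, Finset.sum_mul, Finset.sum_mul]
  refine norm_sum_le_of_le _ fun j _ => ?_
  have h1 := norm_exp_I_mul_sub_one_le g (θ ℓ)
  have h2 := norm_exp_I_mul_sub_one_le g (θ j)
  have h3 : ‖Complex.exp (Complex.I * (g * ∑ r ∈ Finset.Ioo ℓ j, (θ r : ℂ)))‖ = 1 := by
    have := Complex.norm_exp_I_mul_ofReal (g * ∑ r ∈ Finset.Ioo ℓ j, θ r)
    push_cast at this
    exact this
  have h4 : ‖(a : ℂ) ^ (j - ℓ) - 1‖ ≤ ((j - ℓ : ℕ) : ℝ) * (1 - a) := by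
    have hb := one_add_mul_le_pow (a := a - 1) (by linarith [ha.1]) (j - ℓ)
    have hle : a ^ (j - ℓ) ≤ 1 := pow_le_one₀ ha.1.le ha.2.le
    rw [add_sub_cancel] at hb
    rw [← Complex.ofReal_pow, ← Complex.ofReal_one, ← Complex.ofReal_sub, Complex.norm_real,
      Real.norm_eq_abs, abs_sub_comm, abs_of_nonneg (by linarith)]
    linarith
  push_cast
  rw [one_pow, ← sub_mul, ← sub_mul, ← sub_mul, norm_mul, norm_mul, norm_mul, h3, mul_one]
  calc _ ≤ (((j - ℓ : ℕ) : ℝ) * (1 - a)) * (|g| * |θ ℓ|) * (|g| * |θ j|) := by gcongr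
    _ = _ := by rw [← sq_abs g]; ring

/-- Second-order Taylor expansion of `exp (i g S)` at `g = 0`. -/
lemma tendsto_exp_taylor (S : ℝ) (g : ℕ → ℝ) (hg : Tendsto g atTop (𝓝 0))
    (hpos : ∀ᶠ N in atTop, 0 < g N) :
    Tendsto (fun N => (Complex.exp (Complex.I * ((g N * S : ℝ) : ℂ)) - 1
      - Complex.I * ((g N * S : ℝ) : ℂ)) / ((g N ^ 2 : ℝ) : ℂ)) atTop
      (𝓝 (-((S ^ 2 / 2 : ℝ) : ℂ))) := by
  rw [tendsto_iff_norm_sub_tendsto_zero]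
  have hlim : Tendsto (fun N => g N * |S| ^ 3) atTop (𝓝 0) := by simpa using hg.mul_const _
  have habs : Tendsto (fun N => |g N * S|) atTop (𝓝 0) := by simpa using (hg.mul_const S).abs
  refine squeeze_zero' (Eventually.of_forall fun N => norm_nonneg _) ?_ hlim
  filter_upwards [hpos, habs.eventually (eventually_le_nhds one_pos)] with N h0 h1
  have hn : ‖Complex.I * ((g N * S : ℝ) : ℂ)‖ = |g N * S| := by simp
  have hT := Complex.exp_bound (hn.trans_le h1) (n := 3) (by norm_num)
  rw [hn] at hT
  have hg0 : (g N : ℂ) ≠ 0 := by exact_mod_cast h0.ne'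
  have e : (Complex.exp (Complex.I * ((g N * S : ℝ) : ℂ)) - 1
      - Complex.I * ((g N * S : ℝ) : ℂ)) / ((g N ^ 2 : ℝ) : ℂ) - -((S ^ 2 / 2 : ℝ) : ℂ)
      = (Complex.exp (Complex.I * ((g N * S : ℝ) : ℂ)) - ∑ m ∈ Finset.range 3,
        (Complex.I * ((g N * S : ℝ) : ℂ)) ^ m / (m.factorial : ℂ)) / ((g N ^ 2 : ℝ) : ℂ) := by
    simp only [Finset.sum_range_succ, Finset.sum_range_zero, mul_pow, Complex.I_sq, Nat.factorial]
    push_cast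
    field_simp
    ring
  rw [e, norm_div, Complex.norm_real, Real.norm_of_nonneg (by positivity), div_le_iff₀ (by positivity)]
  refine hT.trans ?_
  rw [abs_mul, abs_of_pos h0]
  have : ((Nat.succ 3 : ℕ) : ℝ) * (((Nat.factorial 3 : ℕ) : ℝ) * ((3 : ℕ) : ℝ))⁻¹ ≤ 1 := by
    norm_num [Nat.factorial]
  calc _ ≤ (g N * |S|) ^ 3 * 1 := by gcongr
    _ = _ := by ring

open Complex in
theorem stmt_13 (lam β : ℝ) (hlam : 0 < lam) (hβ : β ∈ Set.Ioo (-1 : ℝ) 0)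
    (ψ : ℝ → ℝ) (ψ₁ : ℝ) (hψ₁ : 0 < ψ₁)
    (hmeas : Measurable ψ) (hnonneg : ∀ a ∈ Set.Ioo (0 : ℝ) 1, 0 ≤ ψ a)
    (hdens : ∫ a in Set.Ioo (0 : ℝ) 1, ψ a * (1 - a) ^ β = 1)
    (hlim : Filter.Tendsto ψ (nhdsWithin 1 (Set.Ioo (0 : ℝ) 1)) (nhds ψ₁))
    (m : ℕ) (hm : 1 ≤ m) (θ : ℕ → ℝ)
    (γ : ℕ → ℝ) (hγ : ∀ N : ℕ, γ N = (N : ℝ) ^ (-(1 / (2 * (1 + β)))))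
    (A : ℕ → ℝ → ℂ)
    (hA : ∀ N : ℕ, ∀ a : ℝ, A N a =
      (∑ k ∈ Finset.Icc 1 m,
          (Complex.exp (Complex.I * (γ N * θ k)) - 1 - Complex.I * (γ N * θ k))) +
        ∑ ℓ ∈ Finset.Icc 1 m, ∑ j ∈ Finset.Icc (ℓ + 1) m,
          (a : ℂ) ^ (j - ℓ) * (Complex.exp (Complex.I * (γ N * θ ℓ)) - 1) *
            Complex.exp (Complex.I * (γ N * ∑ r ∈ Finset.Ioo ℓ j, θ r)) *
            (Complex.exp (Complex.I * (γ N * θ j)) - 1)) :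
    Filter.Tendsto
      (fun N : ℕ =>
        (N : ℂ) *
          ∫ a in Set.Ioo (0 : ℝ) 1,
            (1 - Complex.exp ((lam / (1 - a) : ℝ) * A N a)) * ((ψ a * (1 - a) ^ β : ℝ) : ℂ))
      Filter.atTop
      (nhds ((ψ₁ * (lam / 2) ^ (1 + β) * Real.Gamma (-β) / (1 + β) *
          |∑ k ∈ Finset.Icc 1 m, θ k| ^ (2 * (1 + β)) : ℝ) : ℂ)) := by
  have hp : 0 < 1 + β := by linarith [hβ.1]
  have hAe : ∀ N a, A N a = expo m θ (γ N) a := hA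
  set S : ℝ := ∑ k ∈ Finset.Icc 1 m, θ k with hS
  set D : ℝ := lipConst m θ with hD
  have hD0 : 0 ≤ D := lipConst_nonneg m θ
  -- the integral would be `0` if the density were not integrable
  have hint : IntegrableOn (fun a => ψ a * (1 - a) ^ β) (Set.Ioo 0 1) := by
    apply Integrable.of_integral_ne_zero
    rw [hdens]
    exact one_ne_zero
  have hγpos : ∀ᶠ N in atTop, 0 < γ N := by
    filter_upwards [eventually_gt_atTop 0] with N hN
    rw [hγ]
    positivity
  have hγ0 : Tendsto γ atTop (𝓝 0) := by
    have := (tendsto_rpow_neg_atTop (y := 1 / (2 * (1 + β))) (by positivity)).comp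
      (tendsto_natCast_atTop_atTop (R := ℝ))
    exact this.congr fun N => (hγ N).symm
  have hs0 : Tendsto (fun N => γ N ^ 2) atTop (𝓝 0) := by simpa using hγ0.pow 2
  have hNs : ∀ᶠ N : ℕ in atTop, (N : ℝ) * (γ N ^ 2) ^ (1 + β) = 1 := by
    filter_upwards [eventually_gt_atTop 0] with N hN
    have hN' : (0 : ℝ) < N := by exact_mod_cast hN
    have e : -(1 / (2 * (1 + β))) * ((2 : ℕ) : ℝ) * (1 + β) = -1 := by
      push_cast
      field_simp
    rw [hγ, ← Real.rpow_natCast, ← Real.rpow_mul hN'.le, ← Real.rpow_mul hN'.le, e,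
      Real.rpow_neg_one, mul_inv_cancel₀ hN'.ne']
  have hcont : ∀ N, Continuous (A N) := by
    intro N
    have : A N = fun a => expo m θ (γ N) a := funext (hAe N)
    rw [this]
    unfold expo
    fun_prop
  have hone : ∀ᶠ N in atTop, ‖expo m θ (γ N) 1‖ ≤ S ^ 2 * γ N ^ 2 := by
    have habs : Tendsto (fun N => |γ N * S|) atTop (𝓝 0) := by simpa using (hγ0.mul_const S).abs
    filter_upwards [habs.eventually (eventually_le_nhds one_pos)] with N h1
    have hn : ‖Complex.I * ((γ N * S : ℝ) : ℂ)‖ = |γ N * S| := by simp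
    rw [expo_one]
    refine (Complex.norm_exp_sub_one_sub_id_le (hn.trans_le h1)).trans_eq ?_
    rw [hn, sq_abs]
    ring
  have key := tendsto_scaled_integral lam β hlam hβ ψ ψ₁ hmeas hnonneg hint hlim
    (fun N => γ N ^ 2) (by filter_upwards [hγpos] with N h using by positivity) hs0 hNs A hcont
    (D + S ^ 2) (S ^ 2 / 2) (by positivity) (by positivity) ?_ ?_ ?_
  · convert key using 3
    have e : lam * (S ^ 2 / 2) = lam / 2 * |S| ^ (2 : ℝ) := by
      rw [Real.rpow_two, sq_abs]
      ring
    rw [e, Real.mul_rpow (by positivity) (by positivity), ← Real.rpow_mul (abs_nonneg S)]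
    ring
  · filter_upwards [hone] with N h1 a ha
    have h2 := norm_expo_sub_le m θ (γ N) a ha
    have h3 : D * γ N ^ 2 * (1 - a) ≤ D * γ N ^ 2 :=
      mul_le_of_le_one_right (by positivity) (by linarith [ha.1])
    rw [hAe]
    have h4 := norm_add_le (expo m θ (γ N) a - expo m θ (γ N) 1) (expo m θ (γ N) 1)
    rw [sub_add_cancel] at h4
    linarith
  · refine Eventually.of_forall fun N a ha => ?_
    have h2 := norm_expo_sub_le m θ (γ N) a ha
    have h3 := (Complex.re_le_norm _).trans h2
    -- the real part at `a = 1` is `cos (γ N * S) - 1`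
    have h4 : (expo m θ (γ N) 1).re ≤ 0 := by
      rw [expo_one, mul_comm Complex.I]
      simp [Complex.exp_re, Real.cos_le_one, -Complex.ofReal_mul]
    rw [Complex.sub_re] at h3
    rw [hAe]
    have h5 : 0 ≤ S ^ 2 * γ N ^ 2 * (1 - a) := mul_nonneg (by positivity) (by linarith [ha.2])
    linarith
  · intro u hu
    have h1 := tendsto_exp_taylor S γ hγ0 hγpos
    have h2 : Tendsto (fun N => (expo m θ (γ N) (1 - γ N ^ 2 * u) - expo m θ (γ N) 1) /
        ((γ N ^ 2 : ℝ) : ℂ)) atTop (𝓝 0) := by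
      have hz : Tendsto (fun N => D * (γ N ^ 2 * u)) atTop (𝓝 0) := by
        simpa using (hs0.mul_const u).const_mul D
      have hsu : Tendsto (fun N => γ N ^ 2 * u) atTop (𝓝 0) := by simpa using hs0.mul_const u
      refine squeeze_zero_norm' ?_ hz
      filter_upwards [hγpos, hsu.eventually (eventually_lt_nhds one_pos)] with N h0 hlt
      have hpos : 0 < γ N ^ 2 * u := by positivity
      have hb := norm_expo_sub_le m θ (γ N) (1 - γ N ^ 2 * u) ⟨by linarith, by linarith⟩
      rw [norm_div, Complex.norm_real, Real.norm_of_nonneg (by positivity),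
        div_le_iff₀ (by positivity)]
      refine hb.trans_eq ?_
      ring
    have h3 := h2.add h1
    rw [zero_add] at h3
    refine h3.congr fun N => ?_
    rw [hAe, ← expo_one, ← add_div, sub_add_cancel]
end
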